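/- arXiv:1308.6399 — 3 statements merged into one kernel-verified Lean document; each statement's English description precedes it below -/
import Mathlib

section
/- Let A ⊆ ℕ be c.e. and non-computable. Then there is a c.e. set C ⊆ A such that for every non-computable split X ⊑ A there is an infinite computable set T ⊆ X with T ∩ C non-computable. Moreover, this holds uniformly: there is a computable function g : ℕ → ℕ such that for every e, if Wₑ is a non-computable split of A, then the g(e)-th partial computable function is total and strictly increasing, its range T is contained in Wₑ, T is computable, and T ∩ C is non-computable. -/
/-- A set of natural numbers is computably enumerable if it is the domain of a
partial computable function. -/
def CE (A : Set ℕ) : Prop := ∃ f : ℕ →. ℕ, Partrec f ∧ A = f.Dom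

/-- A set of natural numbers is computable if its membership predicate is computable. -/
def IsComputableSet (A : Set ℕ) : Prop := ComputablePred (· ∈ A)

/-- `X ⊆* Y` : `X ∖ Y` is finite. -/
def SubsetStar (X Y : Set ℕ) : Prop := (X \ Y).Finite

/-- `X ⊑ A` : `X` is a split of the c.e. set `A`, i.e. `X` is c.e. and there is a
c.e. set `Y` with `X ∩ Y = ∅` and `X ∪ Y = A`. -/
def Split (A X : Set ℕ) : Prop := CE X ∧ ∃ Y : Set ℕ, CE Y ∧ X ∩ Y = ∅ ∧ X ∪ Y = A

/-- `B ⊂ₛ A` : `B` is a small subset of `A`. -/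
def SmallSubset (B A : Set ℕ) : Prop :=
  B ⊆ A ∧ ∀ U V : Set ℕ, CE U → CE V → SubsetStar (U ∩ (A \ B)) V → CE ((U \ A) ∪ V)

/-- `B ⊂ₘ A` : `B` is a major subset of `A`. -/
def MajorSubset (B A : Set ℕ) : Prop :=
  B ⊆ A ∧ (A \ B).Infinite ∧
    ∀ W : Set ℕ, CE W → A ∪ W = Set.univ → (Set.univ \ (B ∪ W)).Finite

/-- The `e`-th partial computable function, via the standard numbering by codes. -/
def phiFun (e : ℕ) : ℕ →. ℕ := (Denumerable.ofNat Nat.Partrec.Code e).eval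

/-- `W e` : the `e`-th c.e. set, the domain of the `e`-th partial computable
function. -/
def Wset (e : ℕ) : Set ℕ := (phiFun e).Dom

/-!
Every `T_e` is enumerated in increasing order from `W_e`, so an infinite `T_e` is computable, and
`C` is built along with the `T_e`, by stages. To make `T_e ∩ C` non-computable, the requirement
`⟨e, i⟩` puts one element of `T_e ∩ W_i` into `C`, where `W_i` is a candidate for the complement.

The difficulty is that `T_e` must avoid the elements already in `C`, so the requirements could keep
it finite. Therefore a pair `p = ⟨e, d⟩`, seen as a guess that `A` is the disjoint union of `W_e`
and `W_d`, delays all requirements `n > p`: some `x` may enter `C` for `n` only if `T_e` has grown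
past `x`, or `x` has entered `W_d`, or `W_e ∪ W_d` has not yet been seen to cover `A` up to `x`. If
the guess is right and `T_e` is finite, then every large `x ∈ W_e` must enter `C`, since `T_e` would
accept it otherwise, and it must do so before it is covered. So for large `x` one decides `x ∈ W_e`
by waiting until `x` is covered, and `W_e` is computable. Whether or not the guess is right, for all
but finitely many `x ∈ A ∖ C` the pair `p` does not delay the requirements forever.
-/

namespace SplitConstruction

open Filter Nat.Partrec Encodable Denumerable

section Computability

theorem ce_iff_rePred {X : Set ℕ} : CE X ↔ REPred (· ∈ X) := by
  refine ⟨?_, fun h => ?_⟩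
  · rintro ⟨f, hf, rfl⟩
    exact hf.dom_re
  · exact ⟨_, h.map (Computable.const (0 : ℕ)).to₂, by ext x; simp [PFun.Dom, Part.assert]⟩

theorem partrec_phiFun (e : ℕ) : Partrec (phiFun e) :=
  Partrec.nat_iff.2 (Code.exists_code.2 ⟨_, rfl⟩)

theorem rePred_wset (e : ℕ) : REPred (· ∈ Wset e) :=
  (partrec_phiFun e).dom_re

theorem exists_wset_eq {X : Set ℕ} (hX : CE X) : ∃ e, Wset e = X := by
  obtain ⟨f, hf, rfl⟩ := hX
  obtain ⟨c, rfl⟩ := Code.exists_code.1 (Partrec.nat_iff.1 hf)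
  exact ⟨encode c, by rw [Wset, phiFun, ofNat_encode]⟩

theorem exists_computable_phiFun_eq {F : ℕ → ℕ →. ℕ} (hF : Partrec₂ F) :
    ∃ g : ℕ → ℕ, Computable g ∧ ∀ e, phiFun (g e) = F e := by
  have hpair : Partrec fun q : ℕ => F q.unpair.1 q.unpair.2 :=
    hF.comp (Computable.fst.comp Computable.unpair) (Computable.snd.comp Computable.unpair)
  obtain ⟨c, hc⟩ := Code.exists_code.1 (Partrec.nat_iff.1 hpair)
  obtain ⟨smn, hsmn, heval⟩ := Code.smn
  refine ⟨fun e => encode (smn c e),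
    Computable.encode.comp (hsmn.comp (Computable.const c) Computable.id), fun e => ?_⟩
  funext x
  simp [phiFun, heval, hc]

theorem exists_partrec_selector {α : Type*} [Primcodable α] {R : α → ℕ → Prop}
    (hR : PrimrecRel R) :
    ∃ f : α →. ℕ, Partrec f ∧ (∀ c, (f c).Dom ↔ ∃ m, R c m) ∧ ∀ c, ∀ m ∈ f c, R c m := by
  classical
  refine ⟨fun c => Nat.rfind fun m => Part.some (decide (R c m)),
    Partrec.rfind hR.decide.to_comp.partrec₂, fun c => ?_, fun c m hm => ?_⟩
  · exact Nat.rfind_dom.trans (by simp)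
  · simpa using Nat.rfind_spec hm

theorem rePred_exists {α : Type*} [Primcodable α] {R : α → ℕ → Prop} (hR : PrimrecRel R) :
    REPred fun c => ∃ m, R c m := by
  obtain ⟨f, hf, hdom, -⟩ := exists_partrec_selector hR
  exact hf.dom_re.of_eq hdom

theorem rePred_of_eventually_iff {p q : ℕ → Prop} (hp : REPred p)
    (hpq : ∀ᶠ x in atTop, p x ↔ q x) : REPred q := by
  classical
  obtain ⟨m, hm⟩ := eventually_atTop.1 hpq
  let L := (List.range m).filter (q ·)
  have hL : REPred (∃ y ∈ L, y = ·) :=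
    ComputablePred.to_re (PrimrecPred.computablePred
      ((PrimrecRel.exists_mem_list Primrec.eq).comp (Primrec.const L) Primrec.id))
  have hlt : Computable fun x => decide (x < m) :=
    (Primrec.nat_lt.comp Primrec.id (Primrec.const m)).decide.to_comp
  refine (Partrec.cond hlt hL hp).dom_re.of_eq fun x => ?_
  by_cases hx : x < m
  · simp [hx, L, Part.assert]
  · simp [hx, hm x (not_lt.1 hx), Part.assert]

theorem isComputableSet_range {b : ℕ → ℕ} (hb : Computable b) (hmono : StrictMono b) :
    IsComputableSet (Set.range b) := by
  have hex : ∀ x, ∃ k, x ≤ b k := fun x => ⟨x, hmono.le_apply⟩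
  have hle : ComputablePred fun p : ℕ × ℕ => p.1 ≤ b p.2 :=
    Computable.computablePred
      (Primrec.nat_le.decide.to_comp.comp Computable.fst (hb.comp Computable.snd))
  have hfind : Computable fun x => b (Nat.find (hex x)) := hb.comp (Computable.find hle hex)
  have hrange : ComputablePred fun x => b (Nat.find (hex x)) = x :=
    Computable.computablePred (Primrec.eq.decide.to_comp.comp hfind Computable.id)
  refine hrange.of_eq fun x => ⟨fun h => ⟨_, h⟩, ?_⟩
  rintro ⟨k, rfl⟩
  exact le_antisymm (hmono.monotone (Nat.find_min' _ le_rfl)) (Nat.find_spec (hex (b k)))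

end Computability

section PrimrecPred

variable {α β γ : Type*} [Primcodable α] [Primcodable β] [Primcodable γ]

theorem primrecPred_forall_lt {f : γ → ℕ} {R : γ → ℕ → Prop} (hf : Primrec f)
    (hR : PrimrecRel R) : PrimrecPred fun c => ∀ n < f c, R c n :=
  (hR.swap.forall_mem_list.comp (Primrec.list_range.comp hf) Primrec.id).of_eq fun c => by simp

theorem primrecPred_sumElim {f : γ → α ⊕ β} {p : γ → α → Prop} {q : γ → β → Prop}
    (hf : Primrec f) (hp : PrimrecRel p) (hq : PrimrecRel q) :
    PrimrecPred fun c => (f c).elim (p c) (q c) := by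
  classical
  refine (Primrec.eq.comp (Primrec.sumCasesOn hf hp.decide hq.decide)
    (Primrec.const true)).of_eq fun c => ?_
  cases f c <;> simp

theorem primrecPred_exists_inl_mem {H : γ → List (α ⊕ β)} {R : γ → α → Prop}
    (hH : Primrec H) (hR : PrimrecRel R) :
    PrimrecPred fun c => ∃ t, Sum.inl t ∈ H c ∧ R c t := by
  have hfalse : PrimrecRel fun (_ : (α ⊕ β) × γ) (_ : β) => False :=
    Primrec.primrecPred (by simpa using Primrec.const false)
  have helim : PrimrecRel fun (z : α ⊕ β) (c : γ) => z.elim (R c) fun _ => False :=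
    primrecPred_sumElim Primrec.fst (hR.comp (Primrec.snd.comp Primrec.fst) Primrec.snd) hfalse
  exact (helim.exists_mem_list.comp hH Primrec.id).of_eq fun c => by simp

theorem primrecPred_exists_inr_mem {H : γ → List (α ⊕ β)} {R : γ → β → Prop}
    (hH : Primrec H) (hR : PrimrecRel R) :
    PrimrecPred fun c => ∃ t, Sum.inr t ∈ H c ∧ R c t := by
  have hfalse : PrimrecRel fun (_ : (α ⊕ β) × γ) (_ : α) => False :=
    Primrec.primrecPred (by simpa using Primrec.const false)
  have helim : PrimrecRel fun (z : α ⊕ β) (c : γ) => z.elim (fun _ => False) (R c) :=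
    primrecPred_sumElim Primrec.fst hfalse (hR.comp (Primrec.snd.comp Primrec.fst) Primrec.snd)
  exact (helim.exists_mem_list.comp hH Primrec.id).of_eq fun c => by simp

end PrimrecPred

section History

variable {α : Type*}

/-- The action attempted at stage `s`: a sequence in which every element of `α` occurs infinitely
often. -/
def attempt (α : Type*) [Denumerable α] (s : ℕ) : α := ofNat α s.unpair.1

theorem frequently_attempt_eq [Denumerable α] (x : α) : ∃ᶠ s in atTop, attempt α s = x :=
  frequently_atTop.2 fun N => ⟨Nat.pair (encode x) N, Nat.right_le_pair _ _, by simp [attempt]⟩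

theorem primrec_attempt [Denumerable α] : Primrec (attempt α) :=
  (Primrec.ofNat α).comp (Primrec.fst.comp Primrec.unpair)

variable [Denumerable α] {P : ℕ → List α → α → Prop}

open Classical in
/-- The actions performed before stage `s`, latest first, when the action attempted at a stage is
performed exactly if the rule `P` allows it, given the stage and the history so far. -/
noncomputable def history (P : ℕ → List α → α → Prop) : ℕ → List α
  | 0 => []
  | s + 1 => if P s (history P s) (attempt α s) then attempt α s :: history P s else history P s

theorem mem_history {x : α} {s : ℕ} :
    x ∈ history P s ↔ ∃ r < s, attempt α r = x ∧ P r (history P r) x := by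
  induction s with
  | zero => simp [history]
  | succ s ih =>
    simp only [Nat.lt_succ_iff_lt_or_eq, or_and_right, exists_or, exists_eq_left, ← ih]
    rw [history]
    split_ifs with h <;> grind

theorem history_mono {x : α} {s t : ℕ} (hst : s ≤ t) (hx : x ∈ history P s) : x ∈ history P t := by
  obtain ⟨r, hr, h⟩ := mem_history.1 hx
  exact mem_history.2 ⟨r, hr.trans_le hst, h⟩

theorem primrec_history (hP : PrimrecPred fun c : (ℕ × List α) × α => P c.1.1 c.1.2 c.2) :
    Primrec (history P) := by
  classical
  have hattempt : Primrec fun c : ℕ × List α => attempt α c.1 := primrec_attempt.comp Primrec.fst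
  have hstep : Primrec₂ fun (s : ℕ) (H : List α) =>
      if P s H (attempt α s) then attempt α s :: H else H :=
    Primrec.ite (hP.comp (Primrec.id.pair hattempt))
      (Primrec.list_cons.comp hattempt Primrec.snd) Primrec.snd
  refine (Primrec.nat_rec₁ [] hstep).of_eq fun s => ?_
  induction s with
  | zero => rfl
  | succ s ih => simp only [history, ← ih]

/-- The action `x` is performed at some stage of the construction with rule `P`. -/
def Accepted (P : ℕ → List α → α → Prop) (x : α) : Prop := ∃ s, x ∈ history P s

theorem Accepted.eventually {x : α} (hx : Accepted P x) : ∀ᶠ s in atTop, x ∈ history P s := by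
  obtain ⟨s, hs⟩ := hx
  filter_upwards [eventually_ge_atTop s] with t hst using history_mono hst hs

theorem Accepted.exists_stage {x : α} (hx : Accepted P x) :
    ∃ s, x ∈ history P (s + 1) ∧ P s (history P s) x := by
  obtain ⟨s, hs⟩ := hx
  obtain ⟨r, -, hr⟩ := mem_history.1 hs
  exact ⟨r, mem_history.2 ⟨r, r.lt_succ_self, hr⟩, hr.2⟩

theorem Accepted.of_eventually {x : α} (hx : ∀ᶠ s in atTop, P s (history P s) x) :
    Accepted P x := by
  obtain ⟨s, hs, hP⟩ := ((frequently_attempt_eq x).and_eventually hx).exists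
  exact ⟨s + 1, mem_history.2 ⟨s, s.lt_succ_self, hs, hP⟩⟩

theorem Accepted.exists_stage_of_ne {x y : α} (hx : Accepted P x) (hy : Accepted P y)
    (hne : x ≠ y) :
    (∃ s, x ∈ history P s ∧ P s (history P s) y) ∨ ∃ s, y ∈ history P s ∧ P s (history P s) x := by
  obtain ⟨_, hs⟩ := hx
  obtain ⟨_, ht⟩ := hy
  obtain ⟨s, -, hsx⟩ := mem_history.1 hs
  obtain ⟨t, -, hty⟩ := mem_history.1 ht
  rcases lt_trichotomy s t with hst | rfl | hts
  · exact .inl ⟨t, mem_history.2 ⟨s, hst, hsx⟩, hty.2⟩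
  · exact absurd (hsx.1.symm.trans hty.1) hne
  · exact .inr ⟨s, mem_history.2 ⟨t, hts, hty⟩, hsx.2⟩

end History

section Stage

variable {e s t x : ℕ}

/-- The finite approximation `W_{e,s}` of the c.e. set `W_e`, obtained by running the `e`-th program
with bound `s`. -/
def WsetStage (e s : ℕ) : Set ℕ := {x | (Code.evaln s (ofNat Code e) x).isSome}

theorem wsetStage_mono (hst : s ≤ t) : WsetStage e s ⊆ WsetStage e t := by
  intro x hx
  obtain ⟨y, hy⟩ := Option.isSome_iff_exists.1 hx
  exact Option.isSome_iff_exists.2 ⟨y, Code.evaln_mono hst hy⟩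

theorem lt_of_mem_wsetStage (hx : x ∈ WsetStage e s) : x < s := by
  obtain ⟨y, hy⟩ := Option.isSome_iff_exists.1 hx
  exact Code.evaln_bound hy

theorem mem_wset_iff_exists : x ∈ Wset e ↔ ∃ s, x ∈ WsetStage e s := by
  simp only [Wset, phiFun, PFun.mem_dom, WsetStage, Set.mem_ofPred_eq, Option.isSome_iff_exists]
  rw [exists_comm]
  exact exists_congr fun y => Code.evaln_complete

theorem wsetStage_subset_wset (e s : ℕ) : WsetStage e s ⊆ Wset e :=
  fun _ hx => mem_wset_iff_exists.2 ⟨s, hx⟩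

theorem eventually_mem_wsetStage (hx : x ∈ Wset e) : ∀ᶠ s in atTop, x ∈ WsetStage e s := by
  obtain ⟨s, hs⟩ := mem_wset_iff_exists.1 hx
  filter_upwards [eventually_ge_atTop s] with t hst using wsetStage_mono hst hs

theorem primrecPred_mem_wsetStage {γ : Type*} [Primcodable γ] {e s x : γ → ℕ} (he : Primrec e)
    (hs : Primrec s) (hx : Primrec x) : PrimrecPred fun c => x c ∈ WsetStage (e c) (s c) :=
  Primrec.eq.comp (Primrec.option_isSome.comp (Code.primrec_evaln.comp
    ((hs.pair ((Primrec.ofNat Code).comp he)).pair hx))) (Primrec.const true)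

end Stage

/-- The actions of the construction: `inl (e, k, x)` makes `x` the `k`-th element of `T_e`, and
`inr (n, x)` puts `x` into the diagonal set `C` for the sake of the requirement `n = ⟨e, i⟩`, which
asks that `W_i` not be the complement of `T_e ∩ C`. -/
abbrev Action := (ℕ × ℕ × ℕ) ⊕ (ℕ × ℕ)

/-- `x` may become the `k`-th element of `T_e` at stage `s`, after the history `H`. -/
structure CanSelect (a s : ℕ) (H : List Action) (e k x : ℕ) : Prop where
  mem_base : x ∈ WsetStage a s
  mem_wset : x ∈ WsetStage e s
  not_enumerated : ∀ n, .inr (n, x) ∉ H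
  exists_of_lt : ∀ j < k, ∃ y, .inl (e, j, y) ∈ H
  lt_of_selected : ∀ j y, .inl (e, j, y) ∈ H → j < k ∧ y < x

/-- At stage `s` the pair `p = ⟨e, d⟩` looks like a cover of `A = W_a` by two c.e. sets up to `x`,
in the sense that `W_{a,x} ⊆ W_{e,s} ∪ W_{d,s}`. -/
def Covers (a p x s : ℕ) : Prop :=
  WsetStage a x ⊆ WsetStage p.unpair.1 s ∪ WsetStage p.unpair.2 s

/-- The potential split `p = ⟨e, d⟩` lets `x` enter `C` at stage `s`: either `T_e` has reached `x`,
or `x` is in `W_d`, or `p` does not yet cover `A` up to `x`. When `T_e` is finite and `W_d` is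
disjoint from `W_e`, this keeps a large element of `W_e` from entering `C` once it is covered. -/
def Permits (a p s : ℕ) (H : List Action) (x : ℕ) : Prop :=
  (∃ k y, .inl (p.unpair.1, k, y) ∈ H ∧ x ≤ y) ∨ x ∈ WsetStage p.unpair.2 s ∨ ¬ Covers a p x s

/-- `x` may enter `C` for the requirement `n` at stage `s`, after the history `H`. By `unreserved`
the elements of `T_e` of index below `e + 2 * K` in `C` are due to fewer than `e + K` requirements,
hence `T_e` is not almost contained in `C`; on the other hand `unreserved` excludes only finitely
many `x` for each `n`. -/
structure CanEnumerate (a s : ℕ) (H : List Action) (n x : ℕ) : Prop where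
  exists_selected : ∃ k, .inl (n.unpair.1, k, x) ∈ H
  mem_wset : x ∈ WsetStage n.unpair.2 s
  inactive : ∀ y, .inr (n, y) ∉ H
  unreserved : ∀ e k, .inl (e, k, x) ∈ H → 2 * n < e + k
  permits : ∀ p < n, Permits a p s H x

/-- The rule of the construction for the base set `A = W_a`. -/
def CanPerform (a s : ℕ) (H : List Action) : Action → Prop :=
  Sum.elim (fun t => CanSelect a s H t.1 t.2.1 t.2.2) fun q => CanEnumerate a s H q.1 q.2

/-- `x` is the `k`-th element of the set `T_e` of the construction for `A = W_a`. -/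
def Selected (a e k x : ℕ) : Prop := Accepted (CanPerform a) (.inl (e, k, x))

/-- The requirement `n` puts `x` into `C` in the construction for `A = W_a`. -/
def Enumerated (a n x : ℕ) : Prop := Accepted (CanPerform a) (.inr (n, x))

/-- The set `C` of the construction for `A = W_a`. -/
def diagSet (a : ℕ) : Set ℕ := {x | ∃ n, Enumerated a n x}

section Primrec

open Primrec

variable {γ : Type*} [Primcodable γ] {s n x p : γ → ℕ} {H : γ → List Action}

theorem primrecPred_canSelect {e k : γ → ℕ} (a : ℕ) (hs : Primrec s) (hH : Primrec H)
    (he : Primrec e) (hk : Primrec k) (hx : Primrec x) :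
    PrimrecPred fun c => CanSelect a (s c) (H c) (e c) (k c) (x c) := by
  have hnotEnumerated : PrimrecPred fun c => ∀ n, Sum.inr (n, x c) ∉ H c :=
    (primrecPred_exists_inr_mem (R := fun c (q : ℕ × ℕ) => q.2 = x c) hH
      (Primrec.eq.comp (snd.comp snd) (hx.comp fst))).not.of_eq fun c => by grind
  have hinitial : PrimrecPred fun c => ∀ j < k c, ∃ y, Sum.inl (e c, j, y) ∈ H c :=
    primrecPred_forall_lt (R := fun c j => ∃ y, Sum.inl (e c, j, y) ∈ H c) hk
      ((primrecPred_exists_inl_mem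
          (R := fun (c : γ × ℕ) (t : ℕ × ℕ × ℕ) => t.1 = e c.1 ∧ t.2.1 = c.2) (hH.comp fst)
        ((Primrec.eq.comp (fst.comp snd) (he.comp (fst.comp fst))).and
          (Primrec.eq.comp (fst.comp (snd.comp snd)) (snd.comp fst)))).of_eq
        fun c => by simp)
  have hgreatest : PrimrecPred fun c =>
      ∀ j y, Sum.inl (e c, j, y) ∈ H c → j < k c ∧ y < x c :=
    (primrecPred_exists_inl_mem
      (R := fun c (t : ℕ × ℕ × ℕ) => t.1 = e c ∧ ¬ (t.2.1 < k c ∧ t.2.2 < x c)) hH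
      ((Primrec.eq.comp (fst.comp snd) (he.comp fst)).and
        (((nat_lt.comp (fst.comp (snd.comp snd)) (hk.comp fst))).and
          (nat_lt.comp (snd.comp (snd.comp snd)) (hx.comp fst))).not)).not.of_eq fun c => by grind
  exact ((primrecPred_mem_wsetStage (const a) hs hx).and ((primrecPred_mem_wsetStage he hs hx).and
    (hnotEnumerated.and (hinitial.and hgreatest)))).of_eq fun c =>
      ⟨fun ⟨ha, he, hC, hlt, hgt⟩ => ⟨ha, he, hC, hlt, hgt⟩,
        fun ⟨ha, he, hC, hlt, hgt⟩ => ⟨ha, he, hC, hlt, hgt⟩⟩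

theorem primrecPred_covers (a : ℕ) (hp : Primrec p) (hx : Primrec x) (hs : Primrec s) :
    PrimrecPred fun c => Covers a (p c) (x c) (s c) := by
  have hunpair : Primrec fun c : γ × ℕ => (p c.1).unpair := Primrec.unpair.comp (hp.comp fst)
  refine (primrecPred_forall_lt (R := fun c y => y ∉ WsetStage a (x c) ∨
    y ∈ WsetStage (p c).unpair.1 (s c) ∨ y ∈ WsetStage (p c).unpair.2 (s c)) hx
    ((primrecPred_mem_wsetStage (const a) (hx.comp fst) snd).not.or
      ((primrecPred_mem_wsetStage (fst.comp hunpair) (hs.comp fst) snd).or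
        (primrecPred_mem_wsetStage (snd.comp hunpair) (hs.comp fst) snd)))).of_eq fun c => ?_
  exact ⟨fun h y hy => (h y (lt_of_mem_wsetStage hy)).resolve_left (not_not.2 hy),
    fun h y _ => or_iff_not_imp_left.2 fun hy => h (not_not.1 hy)⟩

theorem primrecPred_permits (a : ℕ) (hp : Primrec p) (hs : Primrec s) (hH : Primrec H)
    (hx : Primrec x) : PrimrecPred fun c => Permits a (p c) (s c) (H c) (x c) := by
  have hunpair : Primrec fun c => (p c).unpair := Primrec.unpair.comp hp
  have hpassed : PrimrecPred fun c => ∃ k y, Sum.inl ((p c).unpair.1, k, y) ∈ H c ∧ x c ≤ y :=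
    (primrecPred_exists_inl_mem
      (R := fun c (t : ℕ × ℕ × ℕ) => t.1 = (p c).unpair.1 ∧ x c ≤ t.2.2) hH
      ((Primrec.eq.comp (fst.comp snd) (fst.comp (hunpair.comp fst))).and
        (nat_le.comp (hx.comp fst) (snd.comp (snd.comp snd))))).of_eq fun c => by grind
  exact hpassed.or ((primrecPred_mem_wsetStage (snd.comp hunpair) hs hx).or
    (primrecPred_covers a hp hx hs).not)

theorem primrecPred_canEnumerate (a : ℕ) (hs : Primrec s) (hH : Primrec H) (hn : Primrec n)
    (hx : Primrec x) : PrimrecPred fun c => CanEnumerate a (s c) (H c) (n c) (x c) := by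
  have hunpair : Primrec fun c => (n c).unpair := Primrec.unpair.comp hn
  have hselected : PrimrecPred fun c => ∃ k, Sum.inl ((n c).unpair.1, k, x c) ∈ H c :=
    (primrecPred_exists_inl_mem
      (R := fun c (t : ℕ × ℕ × ℕ) => t.1 = (n c).unpair.1 ∧ t.2.2 = x c) hH
      ((Primrec.eq.comp (fst.comp snd) (fst.comp (hunpair.comp fst))).and
        (Primrec.eq.comp (snd.comp (snd.comp snd)) (hx.comp fst)))).of_eq fun c => by simp
  have hinactive : PrimrecPred fun c => ∀ y, Sum.inr (n c, y) ∉ H c :=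
    (primrecPred_exists_inr_mem (R := fun c (q : ℕ × ℕ) => q.1 = n c) hH
      (Primrec.eq.comp (fst.comp snd) (hn.comp fst))).not.of_eq fun c => by grind
  have hunreserved : PrimrecPred fun c => ∀ e k, Sum.inl (e, k, x c) ∈ H c → 2 * n c < e + k :=
    (primrecPred_exists_inl_mem
      (R := fun c (t : ℕ × ℕ × ℕ) => t.2.2 = x c ∧ ¬ 2 * n c < t.1 + t.2.1) hH
      ((Primrec.eq.comp (snd.comp (snd.comp snd)) (hx.comp fst)).and
        (nat_lt.comp (nat_mul.comp (const 2) (hn.comp fst))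
          (nat_add.comp (fst.comp snd) (fst.comp (snd.comp snd)))).not)).not.of_eq
      fun c => by grind
  have hpermits : PrimrecPred fun c => ∀ p < n c, Permits a p (s c) (H c) (x c) :=
    primrecPred_forall_lt hn
      (primrecPred_permits a snd (hs.comp fst) (hH.comp fst) (hx.comp fst))
  exact (hselected.and ((primrecPred_mem_wsetStage (snd.comp hunpair) hs hx).and
    (hinactive.and (hunreserved.and hpermits)))).of_eq fun c =>
      ⟨fun ⟨hT, hi, hn, hr, hp⟩ => ⟨hT, hi, hn, hr, hp⟩,
        fun ⟨hT, hi, hn, hr, hp⟩ => ⟨hT, hi, hn, hr, hp⟩⟩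

theorem primrec_history_canPerform (a : ℕ) : Primrec (history (CanPerform a)) :=
  primrec_history (primrecPred_sumElim snd
    (primrecPred_canSelect a (fst.comp (fst.comp fst)) (snd.comp (fst.comp fst)) (fst.comp snd)
      (fst.comp (snd.comp snd)) (snd.comp (snd.comp snd)))
    (primrecPred_canEnumerate a (fst.comp (fst.comp fst)) (snd.comp (fst.comp fst))
      (fst.comp snd) (snd.comp snd)))

theorem ce_diagSet (a : ℕ) : CE (diagSet a) := by
  refine ce_iff_rePred.2 ((rePred_exists
    (R := fun x s => ∃ q, Sum.inr q ∈ history (CanPerform a) s ∧ q.2 = x) ?_).of_eq fun x => ?_)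
  · exact primrecPred_exists_inr_mem ((primrec_history_canPerform a).comp snd)
      (Primrec.eq.comp (snd.comp snd) (fst.comp fst))
  · simp only [diagSet, Enumerated, Accepted, Set.mem_ofPred_eq]
    grind

end Primrec

section Verification

variable {a e k k' n x x' : ℕ} {b : ℕ → ℕ}

theorem Selected.exists_canSelect (h : Selected a e k x) :
    ∃ s, CanSelect a s (history (CanPerform a) s) e k x :=
  h.exists_stage.imp fun _ hs => hs.2

theorem Selected.mem_wset (h : Selected a e k x) : x ∈ Wset e := by
  obtain ⟨s, hs⟩ := h.exists_canSelect
  exact wsetStage_subset_wset e s hs.mem_wset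

theorem Selected.mem_wset_base (h : Selected a e k x) : x ∈ Wset a := by
  obtain ⟨s, hs⟩ := h.exists_canSelect
  exact wsetStage_subset_wset a s hs.mem_base

theorem Selected.exists_of_le (h : Selected a e k x) (hk : k' ≤ k) : ∃ y, Selected a e k' y := by
  rcases hk.lt_or_eq with hlt | rfl
  · obtain ⟨s, hs⟩ := h.exists_canSelect
    exact (hs.exists_of_lt k' hlt).imp fun y hy => ⟨s, hy⟩
  · exact ⟨x, h⟩

theorem Selected.lt_or_eq_or_gt (h : Selected a e k x) (h' : Selected a e k' x') :
    (k < k' ∧ x < x') ∨ (k = k' ∧ x = x') ∨ (k' < k ∧ x' < x) := by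
  by_cases heq : k = k' ∧ x = x'
  · exact .inr (.inl heq)
  · rcases h.exists_stage_of_ne h' (by simpa using heq) with ⟨s, hs, hc⟩ | ⟨s, hs, hc⟩
    · exact .inl (hc.lt_of_selected k x hs)
    · exact .inr (.inr (hc.lt_of_selected k' x' hs))

theorem Selected.unique (h : Selected a e k x) (h' : Selected a e k x') : x = x' := by
  have := h.lt_or_eq_or_gt h'
  lia

theorem strictMono_of_selected (hb : ∀ k, Selected a e k (b k)) : StrictMono b := by
  intro i j hij
  have := (hb i).lt_or_eq_or_gt (hb j)
  lia

theorem Enumerated.unique (h : Enumerated a n x) (h' : Enumerated a n x') : x = x' := by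
  by_contra hne
  rcases h.exists_stage_of_ne h' (by simpa using hne) with ⟨s, hs, hc⟩ | ⟨s, hs, hc⟩ <;>
    exact hc.inactive _ hs

theorem Enumerated.exists_selected (h : Enumerated a n x) : ∃ k, Selected a n.unpair.1 k x := by
  obtain ⟨s, -, hs⟩ := h.exists_stage
  exact hs.exists_selected.imp fun k hk => ⟨s, hk⟩

theorem Enumerated.mem_wset (h : Enumerated a n x) : x ∈ Wset n.unpair.2 := by
  obtain ⟨s, -, hs⟩ := h.exists_stage
  exact wsetStage_subset_wset _ s hs.mem_wset

theorem Enumerated.two_mul_lt (h : Enumerated a n x) (hT : Selected a e k x) :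
    2 * n < e + k := by
  rcases h.exists_stage_of_ne hT Sum.inr_ne_inl with ⟨s, hs, hc⟩ | ⟨s, hs, hc⟩
  · exact absurd hs (hc.not_enumerated n)
  · exact hc.unreserved e k hs

theorem diagSet_subset (a : ℕ) : diagSet a ⊆ Wset a := by
  rintro x ⟨n, hn⟩
  obtain ⟨k, hk⟩ := hn.exists_selected
  exact hk.mem_wset_base

theorem eventually_not_selected (a e k : ℕ) : ∀ᶠ x in atTop, ¬ Selected a e k x := by
  have hsub : {x | Selected a e k x}.Subsingleton := fun x hx y hy => hx.unique hy
  exact Nat.cofinite_eq_atTop ▸ hsub.finite.eventually_cofinite_notMem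

theorem eventually_not_enumerated (a n : ℕ) : ∀ᶠ x in atTop, ¬ Enumerated a n x := by
  have hsub : {x | Enumerated a n x}.Subsingleton := fun x hx y hy => hx.unique hy
  exact Nat.cofinite_eq_atTop ▸ hsub.finite.eventually_cofinite_notMem

theorem exists_selected_ge (ha : x ∈ Wset a) (he : x ∈ Wset e) (hC : x ∉ diagSet a) :
    ∃ k y, Selected a e k y ∧ x ≤ y := by
  by_contra! hlt
  have total : ∀ k, ∃ y, Selected a e k y := by
    intro k
    induction k using Nat.strong_induction_on with
    | _ k ih =>
      by_contra hk
      have hinitial : ∀ᶠ s in atTop, ∀ j < k, ∃ y, .inl (e, j, y) ∈ history (CanPerform a) s :=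
        (Set.finite_Iio k).eventually_all.2 fun j hj => by
          obtain ⟨y, hy⟩ := ih j hj
          exact hy.eventually.mono fun s hs => ⟨y, hs⟩
      refine hk ⟨x, Accepted.of_eventually ?_⟩
      filter_upwards [eventually_mem_wsetStage ha, eventually_mem_wsetStage he, hinitial]
        with s hsa hse hs
      refine ⟨hsa, hse, fun n hn => hC ⟨n, s, hn⟩, hs, fun j y hy => ⟨?_, hlt j y ⟨s, hy⟩⟩⟩
      by_contra! hkj
      exact hk (Selected.exists_of_le ⟨s, hy⟩ hkj)
  choose b hb using total
  exact (hlt x (b x) (hb x)).not_ge (strictMono_of_selected hb).le_apply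

theorem frequently_notMem_diagSet (hb : ∀ k, Selected a e k (b k)) :
    ∃ᶠ k in atTop, b k ∉ diagSet a := by
  intro hmem
  simp only [not_not, eventually_atTop] at hmem
  obtain ⟨K, hK⟩ := hmem
  choose! n hn using hK
  have hmaps : ∀ k ∈ Finset.Ico K (e + 2 * K + 2), n k ∈ Finset.range (e + K + 1) := by
    intro k hk
    have := (hn k (Finset.mem_Ico.1 hk).1).two_mul_lt (hb k)
    simp only [Finset.mem_Ico, Finset.mem_range] at hk ⊢
    lia
  obtain ⟨i, hi, j, hj, hij, heq⟩ :=
    Finset.exists_ne_map_eq_of_card_lt_of_maps_to (by simp; lia) hmaps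
  have hi' := hn i (Finset.mem_Ico.1 hi).1
  have hj' := hn j (Finset.mem_Ico.1 hj).1
  exact hij ((strictMono_of_selected hb).injective (hi'.unique (heq ▸ hj')))

theorem Covers.mono {p s t : ℕ} (hst : s ≤ t) (h : Covers a p x s) : Covers a p x t :=
  h.trans (Set.union_subset_union (wsetStage_mono hst) (wsetStage_mono hst))

theorem eventually_permits (a p : ℕ) : ∀ᶠ x in atTop, x ∈ Wset a → x ∉ diagSet a →
    ∀ᶠ s in atTop, Permits a p s (history (CanPerform a) s) x := by
  by_cases hp : Wset a ⊆ Wset p.unpair.1 ∪ Wset p.unpair.2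
  · refine .of_forall fun x hx hC => ?_
    rcases hp hx with he | hd
    · obtain ⟨k, y, hy, hxy⟩ := exists_selected_ge hx he hC
      exact hy.eventually.mono fun s hs => .inl ⟨k, y, hs, hxy⟩
    · exact (eventually_mem_wsetStage hd).mono fun s hs => .inr (.inl hs)
  · obtain ⟨y, hy, hyp⟩ := Set.not_subset.1 hp
    filter_upwards [eventually_mem_wsetStage hy] with x hyx _ _
    refine .of_forall fun s => .inr (.inr fun hcov => hyp ?_)
    exact Set.union_subset_union (wsetStage_subset_wset _ s) (wsetStage_subset_wset _ s) (hcov hyx)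

theorem eventually_unreserved (a n : ℕ) :
    ∀ᶠ x in atTop, ∀ e k, Selected a e k x → 2 * n < e + k := by
  have hfin : {q : ℕ × ℕ | q.1 + q.2 ≤ 2 * n}.Finite :=
    ((Set.finite_Iic (2 * n)).prod (Set.finite_Iic (2 * n))).subset fun q hq => by
      simp only [Set.mem_ofPred_eq] at hq
      simp only [Set.mem_prod, Set.mem_Iic]
      lia
  filter_upwards [hfin.eventually_all.2 fun q _ => eventually_not_selected a q.1 q.2]
    with x hx e k hsel
  by_contra! hle
  exact hx (e, k) hle hsel

theorem not_forall_mem_wset_iff_notMem_diagSet (hb : ∀ k, Selected a e k (b k)) (i : ℕ) :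
    ¬ ∀ k, b k ∈ Wset i ↔ b k ∉ diagSet a := by
  intro hiff
  set n := Nat.pair e i with hn
  have hinactive : ∀ x, ¬ Enumerated a n x := by
    intro x hx
    obtain ⟨k, hk⟩ := hx.exists_selected
    have hi := hx.mem_wset
    simp only [hn, Nat.unpair_pair] at hk hi
    obtain rfl := hk.unique (hb k)
    exact (hiff k).1 hi ⟨n, hx⟩
  have hpermits : ∀ᶠ x in atTop, ∀ p < n, x ∈ Wset a → x ∉ diagSet a →
      ∀ᶠ s in atTop, Permits a p s (history (CanPerform a) s) x :=
    (Set.finite_Iio n).eventually_all.2 fun p _ => eventually_permits a p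
  obtain ⟨k, hC, hfree, hperm⟩ := ((frequently_notMem_diagSet hb).and_eventually
    ((strictMono_of_selected hb).tendsto_atTop.eventually
      ((eventually_unreserved a n).and hpermits))).exists
  refine hinactive (b k) (Accepted.of_eventually ?_)
  filter_upwards [(hb k).eventually, eventually_mem_wsetStage ((hiff k).2 hC),
    (Set.finite_Iio n).eventually_all.2 fun p hp => hperm p hp (hb k).mem_wset_base hC]
    with s hsel hi hs
  exact ⟨⟨k, by simpa [hn] using hsel⟩, by simpa [hn] using hi, fun y hy => hinactive y ⟨s, hy⟩,
    fun e' k' hk' => hfree e' k' ⟨s, hk'⟩, hs⟩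

theorem not_isComputableSet_range_inter_diagSet (hb : ∀ k, Selected a e k (b k)) :
    ¬ IsComputableSet (Set.range b ∩ diagSet a) := by
  intro hcomp
  obtain ⟨i, hi⟩ := exists_wset_eq
    (ce_iff_rePred.2 (ComputablePred.to_re hcomp.not) : CE (Set.range b ∩ diagSet a)ᶜ)
  exact not_forall_mem_wset_iff_notMem_diagSet hb i fun k => by simp [hi]

theorem exists_computable_phiFun_eq_selected (a : ℕ) :
    ∃ g : ℕ → ℕ, Computable g ∧ ∀ e (b : ℕ → ℕ), (∀ k, Selected a e k (b k)) →
      ∀ k, phiFun (g e) k = Part.some (b k) := by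
  have hR : PrimrecRel fun (q : ℕ × ℕ) (m : ℕ) => ∃ t,
      Sum.inl t ∈ history (CanPerform a) m.unpair.1 ∧ t = (q.1, q.2, m.unpair.2) :=
    primrecPred_exists_inl_mem
      ((primrec_history_canPerform a).comp (Primrec.fst.comp (Primrec.unpair.comp Primrec.snd)))
      (Primrec.eq.comp Primrec.snd (Primrec.pair
        (Primrec.fst.comp (Primrec.fst.comp Primrec.fst))
        (Primrec.pair (Primrec.snd.comp (Primrec.fst.comp Primrec.fst))
          (Primrec.snd.comp (Primrec.unpair.comp (Primrec.snd.comp Primrec.fst))))))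
  obtain ⟨f, hf, hdom, hspec⟩ := exists_partrec_selector hR
  have hF : Partrec₂ fun e k => (f (e, k)).map fun m => m.unpair.2 :=
    hf.map (Computable.snd.comp (Computable.unpair.comp Computable.snd)).to₂
  obtain ⟨g, hg, hgF⟩ := exists_computable_phiFun_eq hF
  refine ⟨g, hg, fun e b hb k => ?_⟩
  obtain ⟨s, hs⟩ := hb k
  obtain ⟨m, hm⟩ := Part.dom_iff_mem.1 ((hdom (e, k)).2 ⟨Nat.pair s (b k), by simpa using hs⟩)
  obtain ⟨_, ht, rfl⟩ := hspec _ m hm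
  rw [hgF, Part.eq_some_iff, ← Selected.unique ⟨_, ht⟩ (hb k)]
  exact Part.mem_map _ hm

theorem eventually_covers {d : ℕ} (h : Wset a ⊆ Wset e ∪ Wset d) (x : ℕ) :
    ∀ᶠ s in atTop, Covers a (Nat.pair e d) x s := by
  have hfin : (WsetStage a x).Finite :=
    (Set.finite_Iio x).subset fun y hy => lt_of_mem_wsetStage hy
  simp only [Covers, Nat.unpair_pair]
  refine hfin.eventually_all.2 fun y hy => ?_
  rcases h (wsetStage_subset_wset a x hy) with hye | hyd
  · exact (eventually_mem_wsetStage hye).mono fun s hs => .inl hs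
  · exact (eventually_mem_wsetStage hyd).mono fun s hs => .inr hs

theorem eventually_forall_not_selected_ge (htotal : ¬ ∀ k, ∃ x, Selected a e k x) :
    ∀ᶠ x in atTop, ∀ y ≥ x, ∀ k, ¬ Selected a e k y := by
  push Not at htotal
  obtain ⟨k₀, hk₀⟩ := htotal
  refine eventually_forall_ge_atTop.2 ?_
  filter_upwards [(Set.finite_Iio k₀).eventually_all.2 fun k _ => eventually_not_selected a e k]
    with x hx k hk
  refine hx k (Set.mem_Iio.2 (not_le.1 fun hle => ?_)) hk
  obtain ⟨y, hy⟩ := hk.exists_of_le hle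
  exact hk₀ y hy

theorem exists_inr_mem_history_of_covers {d s : ℕ} (hdisj : Wset e ∩ Wset d = ∅) (he : x ∈ Wset e)
    (ha : x ∈ Wset a) (hT : ∀ y ≥ x, ∀ k, ¬ Selected a e k y)
    (hC : ∀ n ≤ Nat.pair e d, ¬ Enumerated a n x) (hcov : Covers a (Nat.pair e d) x s) :
    ∃ n, .inr (n, x) ∈ history (CanPerform a) s := by
  by_cases hx : x ∈ diagSet a
  · obtain ⟨n, hn⟩ := hx
    obtain ⟨t, ht, hperform⟩ := hn.exists_stage
    have hpermits := hperform.permits (Nat.pair e d) (not_le.1 fun hle => hC n hle hn)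
    simp only [Permits, Nat.unpair_pair] at hpermits
    rcases hpermits with ⟨k, y, hy, hxy⟩ | hd | hncov
    · exact absurd ⟨t, hy⟩ (hT y hxy k)
    · exact absurd ⟨he, wsetStage_subset_wset d t hd⟩ (hdisj ▸ Set.notMem_empty x)
    · exact ⟨n, history_mono (not_le.1 fun hst => hncov (hcov.mono hst)) ht⟩
  · obtain ⟨k, y, hy, hxy⟩ := exists_selected_ge ha he hx
    exact absurd hy (hT y hxy k)

theorem rePred_exists_covers_and_notMem_history (a p d : ℕ) :
    REPred fun x => ∃ s, x ∈ WsetStage d s ∨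
      (Covers a p x s ∧ ∀ n, .inr (n, x) ∉ history (CanPerform a) s) :=
  rePred_exists <| (primrecPred_mem_wsetStage (Primrec.const d) Primrec.snd Primrec.fst).or <|
    (primrecPred_covers a (Primrec.const p) Primrec.fst Primrec.snd).and <|
      (primrecPred_exists_inr_mem (R := fun (c : ℕ × ℕ) (q : ℕ × ℕ) => q.2 = c.1)
        ((primrec_history_canPerform a).comp Primrec.snd)
        (Primrec.eq.comp (Primrec.snd.comp Primrec.snd) (Primrec.fst.comp Primrec.fst))).not.of_eq
      fun c => by grind

theorem isComputableSet_of_not_total {d : ℕ} (hdisj : Wset e ∩ Wset d = ∅)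
    (hunion : Wset e ∪ Wset d = Wset a) (htotal : ¬ ∀ k, ∃ x, Selected a e k x) :
    IsComputableSet (Wset e) := by
  refine ComputablePred.computable_iff_re_compl_re'.2 ⟨rePred_wset e,
    rePred_of_eventually_iff (rePred_exists_covers_and_notMem_history a (Nat.pair e d) d) ?_⟩
  filter_upwards [eventually_forall_not_selected_ge htotal,
    (Set.finite_Iic (Nat.pair e d)).eventually_all.2 fun n _ => eventually_not_enumerated a n]
    with x hT hC
  constructor
  · rintro ⟨s, hd | ⟨hcov, hhistory⟩⟩ he
    · exact absurd ⟨he, wsetStage_subset_wset d s hd⟩ (hdisj ▸ Set.notMem_empty x)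
    · obtain ⟨n, hn⟩ := exists_inr_mem_history_of_covers hdisj he (hunion ▸ .inl he) hT hC hcov
      exact hhistory n hn
  · intro he
    by_cases hd : x ∈ Wset d
    · exact (mem_wset_iff_exists.1 hd).imp fun s hs => .inl hs
    · have ha : x ∉ Wset a := hunion ▸ fun h => h.elim he hd
      exact (eventually_covers hunion.ge x).exists.imp fun s hs =>
        .inr ⟨hs, fun n hn => ha (diagSet_subset a ⟨n, s, hn⟩)⟩

end Verification

end SplitConstruction

open SplitConstruction

/-- If `A` is c.e. and non-computable, then there is a c.e. set
`C ⊆ A` such that every non-computable split `X ⊑ A` contains an infinite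
computable set `T` with `T ∩ C` non-computable; moreover this holds uniformly via a
computable function `g` producing, from an index `e` of a non-computable split of
`A`, an index `g e` of a total strictly increasing computable function whose range
`T ⊆ W e` is computable with `T ∩ C` non-computable. -/
theorem stmt11 (A : Set ℕ) (hA : CE A) (hAnc : ¬ IsComputableSet A) :
    ∃ C : Set ℕ, CE C ∧ C ⊆ A ∧
      (∀ X : Set ℕ, Split A X → ¬ IsComputableSet X →
        ∃ T : Set ℕ, T.Infinite ∧ IsComputableSet T ∧ T ⊆ X ∧
          ¬ IsComputableSet (T ∩ C)) ∧
      ∃ g : ℕ → ℕ, Computable g ∧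
        ∀ e : ℕ, Split A (Wset e) → ¬ IsComputableSet (Wset e) →
          ∃ b : ℕ → ℕ, (∀ x : ℕ, phiFun (g e) x = Part.some (b x)) ∧
            StrictMono b ∧ Set.range b ⊆ Wset e ∧
            IsComputableSet (Set.range b) ∧
            ¬ IsComputableSet (Set.range b ∩ C) := by
  obtain ⟨a, rfl⟩ := exists_wset_eq hA
  obtain ⟨g, hg, hgb⟩ := exists_computable_phiFun_eq_selected a
  have key : ∀ e, Split (Wset a) (Wset e) → ¬ IsComputableSet (Wset e) →
      ∃ b : ℕ → ℕ, (∀ x, phiFun (g e) x = Part.some (b x)) ∧ StrictMono b ∧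
        Set.range b ⊆ Wset e ∧ IsComputableSet (Set.range b) ∧
        ¬ IsComputableSet (Set.range b ∩ diagSet a) := by
    rintro e ⟨-, Y, hY, hdisj, hunion⟩ hnc
    obtain ⟨d, rfl⟩ := exists_wset_eq hY
    have total : ∀ k, ∃ x, Selected a e k x := by
      by_contra htotal
      exact hnc (isComputableSet_of_not_total hdisj hunion htotal)
    choose b hb using total
    have hmono : StrictMono b := strictMono_of_selected hb
    have hcomp : Computable b := (partrec_phiFun (g e)).of_eq (hgb e b hb)
    exact ⟨b, hgb e b hb, hmono, Set.range_subset_iff.2 fun k => (hb k).mem_wset,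
      isComputableSet_range hcomp hmono, not_isComputableSet_range_inter_diagSet hb⟩
  refine ⟨diagSet a, ce_diagSet a, diagSet_subset a, fun X hX hnc => ?_, g, hg, key⟩
  obtain ⟨e, rfl⟩ := exists_wset_eq hX.1
  obtain ⟨b, -, hmono, hsub, hcomp, hdiag⟩ := key e hX hnc
  exact ⟨_, Set.infinite_range_of_injective hmono.injective, hcomp, hsub, hdiag⟩
end

section
/- Let A, D ⊆ ℕ be c.e. with D ⊂ₘ A. Let I be a collection of splits of A such that: I is nonempty; if X, Y ∈ I then X ∪ Y ∈ I; if X ∈ I, Y ⊑ A and Y ⊆* X ∪ D then Y ∈ I; and the index set {e : Wₑ ⊑ A and Wₑ ∈ I} is Σ⁰₃ (so I is a Σ⁰₃-ideal of the boolean algebra of splits of A modulo D and finite differences). Then there is a c.e. set C with D ⊆* C ⊆* A such that for every split X ⊑ A: X ∈ I if and only if X ∩ C ⊆* D. -/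
/-- A set `P ⊆ ℕ` is `Σ⁰₃` if there is a computable relation `R ⊆ ℕ⁴` such that
`n ∈ P ↔ ∃ a ∀ b ∃ c, R n a b c`. -/
def Sigma03 (P : Set ℕ) : Prop :=
  ∃ R : ℕ → ℕ → ℕ → ℕ → Prop,
    ComputablePred (fun t : ℕ × ℕ × ℕ × ℕ => R t.1 t.2.1 t.2.2.1 t.2.2.2) ∧
    ∀ n : ℕ, n ∈ P ↔ ∃ a : ℕ, ∀ b : ℕ, ∃ c : ℕ, R n a b c

/-!
The ideal is generated by a uniformly c.e. sequence of splits `P n ⊔ Q n =* A`: for each guess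
that `Wᵢ` complements `Wₑ` in `A` and that `a` witnesses the `Σ⁰₃` fact `Wₑ ∈ I`, elements of `Wₑ`
are put into `P` only if the guess looks right for long enough before they enter `A`. A wrong guess
then contributes a finite set, and since `D` is major in `A`, a right one captures almost all of
`Wₑ` outside `D`.

It remains to find `C` almost contained in every `Q n` modulo `D` such that a c.e. set almost
disjoint from `C` modulo `D` is almost disjoint from some `Q 0 ∩ ⋯ ∩ Q m` as well, hence almost
covered by `P 0 ∪ ⋯ ∪ P m`. Take `D` together with, for every `j`, a piece of
`Wⱼ ∩ Q 0 ∩ ⋯ ∩ Q j` that is finite modulo `D`, but not contained in `D` unless the whole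
intersection is.
-/

open Filter Set

section REPred

variable {α β : Type*} [Primcodable α] [Primcodable β]

/-- A primitive recursive approximation of the predicate `p`: `R a s` says that `p a` has been
confirmed by stage `s`. Only elements with code below `s` are confirmed by stage `s`. -/
structure IsStageApprox (R : α → ℕ → Prop) (p : α → Prop) : Prop where
  primrecRel : PrimrecRel R
  mono {a : α} {s t : ℕ} : s ≤ t → R a s → R a t
  encode_lt {a : α} {s : ℕ} : R a s → Encodable.encode a < s
  exists_iff (a : α) : (∃ s, R a s) ↔ p a

theorem IsStageApprox.eventually {R : α → ℕ → Prop} {p : α → Prop} (hR : IsStageApprox R p)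
    {a : α} (ha : p a) : ∀ᶠ s in atTop, R a s := by
  obtain ⟨s, hs⟩ := (hR.exists_iff a).2 ha
  exact eventually_atTop.2 ⟨s, fun t hst => hR.mono hst hs⟩

theorem exists_isStageApprox {p : α → Prop} (hp : REPred p) : ∃ R, IsStageApprox R p := by
  obtain ⟨c, hc⟩ := Nat.Partrec.Code.exists_code.1 hp
  refine ⟨fun a s => (c.evaln s (Encodable.encode a)).isSome = true, ?_, ?_, ?_, fun a => ?_⟩
  · have h_evaln : Primrec fun z : α × ℕ => c.evaln z.2 (Encodable.encode z.1) :=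
      Nat.Partrec.Code.primrec_evaln.comp
        ((Primrec.snd.pair (Primrec.const c)).pair (Primrec.encode.comp Primrec.fst))
    exact Primrec.eq.comp (Primrec.option_isSome.comp h_evaln) (Primrec.const true)
  · intro a s t hst h
    obtain ⟨y, hy⟩ := Option.isSome_iff_exists.1 h
    exact Option.isSome_iff_exists.2 ⟨y, Nat.Partrec.Code.evaln_mono hst hy⟩
  · intro a s h
    obtain ⟨y, hy⟩ := Option.isSome_iff_exists.1 h
    exact Nat.Partrec.Code.evaln_bound hy
  · have h_dom : (c.eval (Encodable.encode a)).Dom ↔ p a := by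
      rw [hc]
      simp [Part.assert]
    simp only [← h_dom, Part.dom_iff_mem, Nat.Partrec.Code.evaln_complete,
      Option.isSome_iff_exists, Option.mem_def]
    exact exists_comm

theorem rePred_exists_of_primrecRel {R : α → ℕ → Prop} (hR : PrimrecRel R) :
    REPred fun a => ∃ s, R a s := by
  classical
  have h_search : Partrec fun a => Nat.rfind fun s => Part.some (decide (R a s)) :=
    Partrec.rfind hR.decide.to_comp.partrec.to₂
  exact h_search.dom_re.of_eq fun a => Nat.rfind_dom'.trans (by simp)

theorem rePred_comp {p : β → Prop} (hp : REPred p) {f : α → β} (hf : Computable f) :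
    REPred fun a => p (f a) :=
  Partrec.comp hp hf

theorem rePred_and {p q : α → Prop} (hp : REPred p) (hq : REPred q) :
    REPred fun a => p a ∧ q a := by
  obtain ⟨R, hR⟩ := exists_isStageApprox hp
  obtain ⟨S, hS⟩ := exists_isStageApprox hq
  refine (rePred_exists_of_primrecRel (R := fun a s => R a s ∧ S a s)
    (hR.primrecRel.and hS.primrecRel)).of_eq fun a => ⟨?_, ?_⟩
  · rintro ⟨s, hRs, hSs⟩
    exact ⟨(hR.exists_iff a).1 ⟨s, hRs⟩, (hS.exists_iff a).1 ⟨s, hSs⟩⟩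
  · rintro ⟨ha, ha'⟩
    exact ((hR.eventually ha).and (hS.eventually ha')).exists

theorem rePred_or {p q : α → Prop} (hp : REPred p) (hq : REPred q) :
    REPred fun a => p a ∨ q a := by
  obtain ⟨R, hR⟩ := exists_isStageApprox hp
  obtain ⟨S, hS⟩ := exists_isStageApprox hq
  refine (rePred_exists_of_primrecRel (R := fun a s => R a s ∨ S a s)
    (hR.primrecRel.or hS.primrecRel)).of_eq fun a => ?_
  rw [exists_or, hR.exists_iff, hS.exists_iff]

theorem rePred_exists {p : α → ℕ → Prop} (hp : REPred fun z : α × ℕ => p z.1 z.2) :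
    REPred fun a => ∃ n, p a n := by
  obtain ⟨R, hR⟩ := exists_isStageApprox hp
  have h_unpair : Primrec fun z : α × ℕ => z.2.unpair := Primrec.unpair.comp Primrec.snd
  refine (rePred_exists_of_primrecRel (R := fun a m => R (a, m.unpair.1) m.unpair.2)
    (hR.primrecRel.comp (Primrec.fst.pair (Primrec.fst.comp h_unpair))
      (Primrec.snd.comp h_unpair))).of_eq fun a => ⟨?_, ?_⟩
  · rintro ⟨m, hm⟩
    exact ⟨_, (hR.exists_iff _).1 ⟨_, hm⟩⟩
  · rintro ⟨n, hn⟩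
    obtain ⟨s, hs⟩ := (hR.exists_iff (a, n)).2 hn
    exact ⟨Nat.pair n s, by simpa only [Nat.unpair_pair] using hs⟩

theorem rePred_forall_lt {p : α → ℕ → Prop} (hp : REPred fun z : α × ℕ => p z.1 z.2)
    {f : α → ℕ} (hf : Computable f) : REPred fun a => ∀ y < f a, p a y := by
  obtain ⟨R, hR⟩ := exists_isStageApprox hp
  have h_swap : PrimrecRel fun (y : ℕ) (w : α × ℕ) => R (w.1, y) w.2 :=
    hR.primrecRel.comp ((Primrec.fst.comp Primrec.snd).pair Primrec.fst)
      (Primrec.snd.comp Primrec.snd)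
  have h_stage : PrimrecRel fun (z : α × ℕ) s => ∀ y < z.2, R (z.1, y) s :=
    (h_swap.forall_mem_list.comp (Primrec.list_range.comp (Primrec.snd.comp Primrec.fst))
      ((Primrec.fst.comp Primrec.fst).pair Primrec.snd)).of_eq fun w => by
        simp only [List.mem_range]
  refine (rePred_comp (rePred_exists_of_primrecRel h_stage)
    (Computable.id.pair hf)).of_eq fun a => ⟨?_, ?_⟩
  · rintro ⟨s, hs⟩ y hy
    exact (hR.exists_iff (a, y)).1 ⟨s, hs y hy⟩
  · intro h
    exact ((finite_Iio (f a)).eventually_all.2 fun y hy => hR.eventually (h y hy)).exists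

/-- The reduction principle: put `a` on the side on which it is confirmed first, preferring `p`. -/
theorem rePred_reduction {p q : α → Prop} (hp : REPred p) (hq : REPred q) :
    ∃ p' q' : α → Prop, REPred p' ∧ REPred q' ∧ (∀ a, p' a → p a) ∧ (∀ a, q' a → q a) ∧
      (∀ a, p' a → ¬ q' a) ∧ ∀ a, p a ∨ q a → p' a ∨ q' a := by
  classical
  obtain ⟨R, hR⟩ := exists_isStageApprox hp
  obtain ⟨S, hS⟩ := exists_isStageApprox hq
  refine ⟨fun a => ∃ s, R a (s + 1) ∧ ¬ S a s, fun a => ∃ s, S a s ∧ ¬ R a s,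
    rePred_exists_of_primrecRel ?_, rePred_exists_of_primrecRel ?_, ?_, ?_, ?_, fun a ha => ?_⟩
  · exact (hR.primrecRel.comp Primrec.fst (Primrec.succ.comp Primrec.snd)).and hS.primrecRel.not
  · exact hS.primrecRel.and hR.primrecRel.not
  · rintro a ⟨s, hs, -⟩
    exact (hR.exists_iff a).1 ⟨_, hs⟩
  · rintro a ⟨s, hs, -⟩
    exact (hS.exists_iff a).1 ⟨_, hs⟩
  · rintro a ⟨s, hRs, hSs⟩ ⟨t, hSt, hRt⟩
    have hst : s < t := lt_of_not_ge fun hts => hSs (hS.mono hts hSt)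
    exact hRt (hR.mono hst hRs)
  · have h_stage : ∃ s, R a s ∨ S a s := by
      rwa [exists_or, hR.exists_iff, hS.exists_iff]
    by_cases hRa : R a (Nat.find h_stage)
    · obtain ⟨s, hs⟩ := Nat.exists_eq_succ_of_ne_zero (hR.encode_lt hRa).ne_bot
      have h_before := Nat.find_min h_stage (m := s) (by omega)
      exact Or.inl ⟨s, by rwa [hs] at hRa, fun hSs => h_before (Or.inr hSs)⟩
    · exact Or.inr ⟨_, (Nat.find_spec h_stage).resolve_left hRa, hRa⟩

theorem primrecPred_mem_of_finite {F : Set α} (hF : F.Finite) : PrimrecPred fun x => x ∈ F :=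
  ((Primrec.eq (α := α)).exists_mem_list.comp (Primrec.const hF.toFinset.toList)
    Primrec.id).of_eq fun x => by simp

end REPred

section CE

variable {A B F : Set ℕ}

theorem ce_iff_rePred : CE A ↔ REPred fun x => x ∈ A := by
  refine ⟨?_, fun hA => ⟨_, Partrec.map hA (Computable.const 0).to₂, ?_⟩⟩
  · rintro ⟨f, hf, rfl⟩
    exact hf.dom_re
  · ext x
    simp [PFun.Dom, Part.assert]

theorem CE.union (hA : CE A) (hB : CE B) : CE (A ∪ B) :=
  ce_iff_rePred.2 (rePred_or (ce_iff_rePred.1 hA) (ce_iff_rePred.1 hB))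

theorem CE.union_finite (hA : CE A) (hF : F.Finite) : CE (A ∪ F) :=
  hA.union (ce_iff_rePred.2 (primrecPred_mem_of_finite hF).computablePred.to_re)

theorem CE.diff_finite (hA : CE A) (hF : F.Finite) : CE (A \ F) :=
  ce_iff_rePred.2 <|
    rePred_and (ce_iff_rePred.1 hA) (primrecPred_mem_of_finite hF).not.computablePred.to_re

theorem CE.exists_Wset_eq (hA : CE A) : ∃ e, Wset e = A := by
  obtain ⟨f, hf, rfl⟩ := hA
  obtain ⟨c, hc⟩ := Nat.Partrec.Code.exists_code.1 (Partrec.nat_iff.1 hf)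
  exact ⟨Encodable.encode c, by simp [Wset, phiFun, hc]⟩

theorem subsetStar_iff_eventually : SubsetStar A B ↔ ∀ᶠ x in cofinite, x ∈ A → x ∈ B := by
  simp only [SubsetStar, eventually_cofinite, Classical.not_imp]
  rfl

theorem subsetStar_of_subset (h : A ⊆ B) : SubsetStar A B :=
  subsetStar_iff_eventually.2 (Eventually.of_forall h)

end CE

section UniformlyCE

variable {ι κ : Type*} [Primcodable ι] [Primcodable κ] {A D : Set ℕ} {U V T : ι → Set ℕ}

/-- The sets `V i` are c.e. uniformly in the index `i`. -/
def UniformlyCE (V : ι → Set ℕ) : Prop :=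
  REPred fun z : ι × ℕ => z.2 ∈ V z.1

theorem uniformlyCE_Wset : UniformlyCE Wset :=
  (Nat.Partrec.Code.eval_part.comp
    ((Computable.ofNat Nat.Partrec.Code).comp Computable.fst) Computable.snd).dom_re

theorem CE.uniformlyCE_const (hA : CE A) : UniformlyCE fun _ : ι => A :=
  rePred_comp (ce_iff_rePred.1 hA) Computable.snd

namespace UniformlyCE

theorem comp (hV : UniformlyCE V) {f : κ → ι} (hf : Computable f) :
    UniformlyCE fun k => V (f k) :=
  rePred_comp hV (f := fun z : κ × ℕ => (f z.1, z.2))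
    ((hf.comp Computable.fst).pair Computable.snd)

theorem ce (hV : UniformlyCE V) (i : ι) : CE (V i) :=
  ce_iff_rePred.2 (rePred_comp hV ((Computable.const i).pair Computable.id))

theorem inter (hU : UniformlyCE U) (hV : UniformlyCE V) : UniformlyCE fun i => U i ∩ V i :=
  rePred_and hU hV

theorem union (hU : UniformlyCE U) (hV : UniformlyCE V) : UniformlyCE fun i => U i ∪ V i :=
  rePred_or hU hV

theorem ce_iUnion {V : ℕ → Set ℕ} (hV : UniformlyCE V) : CE (⋃ n, V n) := by
  have h_swap : REPred fun z : ℕ × ℕ => z.1 ∈ V z.2 :=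
    rePred_comp hV (Computable.snd.pair Computable.fst)
  exact ce_iff_rePred.2 ((rePred_exists h_swap).of_eq fun x => mem_iUnion.symm)

theorem biInter_le {V : ℕ → Set ℕ} (hV : UniformlyCE V) :
    UniformlyCE fun m => ⋂ n ≤ m, V n := by
  have h_mem : REPred fun w : (ℕ × ℕ) × ℕ => w.1.2 ∈ V w.2 :=
    rePred_comp hV (Computable.snd.pair (Computable.snd.comp Computable.fst))
  have h_forall : REPred fun z : ℕ × ℕ => ∀ n < z.1 + 1, z.2 ∈ V n :=
    rePred_forall_lt h_mem (Computable.succ.comp Computable.fst)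
  exact h_forall.of_eq fun z => by simp only [Nat.lt_succ_iff, mem_iInter]

theorem exists_reduction (hU : UniformlyCE U) (hV : UniformlyCE V) :
    ∃ U' V' : ι → Set ℕ, UniformlyCE U' ∧ UniformlyCE V' ∧ (∀ i, U' i ⊆ U i) ∧
      (∀ i, V' i ⊆ V i) ∧ (∀ i, Disjoint (U' i) (V' i)) ∧ ∀ i, U i ∪ V i ⊆ U' i ∪ V' i := by
  obtain ⟨p, q, hp, hq, hpU, hqV, h_disj, h_cover⟩ := rePred_reduction hU hV
  exact ⟨fun i => {x | p (i, x)}, fun i => {x | q (i, x)}, hp, hq, fun i x => hpU (i, x),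
    fun i x => hqV (i, x), fun i => Set.disjoint_left.2 fun x => h_disj (i, x),
    fun i x => h_cover (i, x)⟩

theorem exists_eq_univ_iff_subset (hA : CE A) (hV : UniformlyCE V) :
    ∃ T : ι → Set ℕ, UniformlyCE T ∧ ∀ i, T i = univ ↔ A ⊆ V i := by
  obtain ⟨R, hR⟩ := exists_isStageApprox (ce_iff_rePred.1 hA)
  have h_unpair : Primrec fun z : ι × ℕ => z.2.unpair := Primrec.unpair.comp Primrec.snd
  have h_fst : Primrec fun z : ι × ℕ => z.2.unpair.1 := Primrec.fst.comp h_unpair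
  refine ⟨fun i => {b | R b.unpair.1 b.unpair.2 → b.unpair.1 ∈ V i}, ?_, fun i => ?_⟩
  · have h_not : PrimrecPred fun z : ι × ℕ => ¬ R z.2.unpair.1 z.2.unpair.2 :=
      (hR.primrecRel.comp h_fst (Primrec.snd.comp h_unpair)).not
    exact (rePred_or h_not.computablePred.to_re
      (rePred_comp hV (Computable.fst.pair h_fst.to_comp))).of_eq fun z => imp_iff_not_or.symm
  · rw [eq_univ_iff_forall]
    constructor
    · intro hT x hxA
      obtain ⟨s, hs⟩ := (hR.exists_iff x).2 hxA
      simpa [hs] using hT (Nat.pair x s)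
    · intro hAV b hb
      exact hAV ((hR.exists_iff _).1 ⟨_, hb⟩)

/-- Let `x` enter `K i` when, at some stage, all smaller elements of `V i` enumerated so far are
known to lie in `D`. The least element of `V i \ D` then enters `K i`, and once enumerated it keeps
out everything above it. -/
theorem exists_thinning (hV : UniformlyCE V) (hD : CE D) :
    ∃ K : ι → Set ℕ, UniformlyCE K ∧ (∀ i, K i ⊆ V i) ∧ (∀ i, SubsetStar (K i) D) ∧
      ∀ i, K i ⊆ D → V i ⊆ D := by
  obtain ⟨R, hR⟩ := exists_isStageApprox hV
  have hR_iff : ∀ i x, (∃ s, R (i, x) s) ↔ x ∈ V i := fun i x => hR.exists_iff (i, x)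
  refine ⟨fun i => {x | ∃ s, R (i, x) s ∧ ∀ y < x, R (i, y) s → y ∈ D}, ?_, ?_, ?_, ?_⟩
  · have h_imp : REPred fun w : ((ι × ℕ) × ℕ) × ℕ => R (w.1.1.1, w.2) w.1.2 → w.2 ∈ D := by
      have h_index : Primrec fun w : ((ι × ℕ) × ℕ) × ℕ => w.1.1.1 :=
        Primrec.fst.comp (Primrec.fst.comp Primrec.fst)
      have h_not : PrimrecPred fun w : ((ι × ℕ) × ℕ) × ℕ => ¬ R (w.1.1.1, w.2) w.1.2 :=
        (hR.primrecRel.comp (h_index.pair Primrec.snd) (Primrec.snd.comp Primrec.fst)).not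
      exact (rePred_or h_not.computablePred.to_re
        (rePred_comp (ce_iff_rePred.1 hD) Computable.snd)).of_eq fun w => imp_iff_not_or.symm
    have h_forall : REPred fun w : (ι × ℕ) × ℕ => ∀ y < w.1.2, R (w.1.1, y) w.2 → y ∈ D :=
      rePred_forall_lt h_imp (Computable.snd.comp Computable.fst)
    exact rePred_exists (rePred_and hR.primrecRel.computablePred.to_re h_forall)
  · rintro i x ⟨s, hs, -⟩
    exact (hR_iff i x).1 ⟨s, hs⟩
  · intro i
    by_cases hi : V i ⊆ D
    · exact subsetStar_of_subset fun x ⟨s, hs, _⟩ => hi ((hR_iff i x).1 ⟨s, hs⟩)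
    obtain ⟨x, hxV, hxD⟩ := not_subset.1 hi
    obtain ⟨t, ht⟩ := (hR_iff i x).2 hxV
    refine (finite_Iic (max x t)).subset ?_
    rintro z ⟨⟨s, hs, h_small⟩, -⟩
    by_contra h_large
    rw [mem_Iic, not_le, max_lt_iff] at h_large
    obtain ⟨hxz, htz⟩ := h_large
    have hzs : z < s := (Nat.right_le_pair _ _).trans_lt (hR.encode_lt hs)
    exact hxD (h_small x hxz (hR.mono (htz.trans hzs).le ht))
  · classical
    intro i hK
    by_contra hi
    have h_ex : ∃ x, x ∈ V i ∧ x ∉ D := not_subset.1 hi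
    obtain ⟨hxV, hxD⟩ := Nat.find_spec h_ex
    obtain ⟨s, hs⟩ := (hR_iff i _).2 hxV
    refine hxD (hK ⟨s, hs, fun y hy hys => ?_⟩)
    by_contra hyD
    exact Nat.find_min h_ex hy ⟨(hR_iff i y).1 ⟨s, hys⟩, hyD⟩

end UniformlyCE

theorem Sigma03.exists_uniformlyCE {S : Set ℕ} (hS : Sigma03 S) :
    ∃ T : ℕ × ℕ → Set ℕ, UniformlyCE T ∧ ∀ n, n ∈ S ↔ ∃ a, T (n, a) = univ := by
  obtain ⟨R, hR, hRS⟩ := hS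
  refine ⟨fun z => {b | ∃ c, R z.1 z.2 b c}, ?_, fun n => ?_⟩
  · exact rePred_exists (rePred_comp hR.to_re
      (f := fun w : ((ℕ × ℕ) × ℕ) × ℕ => (w.1.1.1, w.1.1.2, w.1.2, w.2))
      ((Computable.fst.comp (Computable.fst.comp Computable.fst)).pair
        ((Computable.snd.comp (Computable.fst.comp Computable.fst)).pair
          ((Computable.snd.comp Computable.fst).pair Computable.snd))))
  · simp only [hRS, eq_univ_iff_forall, mem_ofPred_eq]

end UniformlyCE

section Splits

variable {ι κ : Type*} [Primcodable ι] [Primcodable κ] {A D : Set ℕ} {I : Set (Set ℕ)}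

/-- A family of c.e. subsets `P i` of `A`, each of them a split of `A` because the set `Q i`, c.e.
uniformly in `i`, is disjoint from `P i` and exhausts the rest of `A` up to finitely many
elements. -/
structure IsUniformSplitting (A : Set ℕ) (P Q : ι → Set ℕ) : Prop where
  uniformlyCE_left : UniformlyCE P
  uniformlyCE_right : UniformlyCE Q
  disjoint (i : ι) : Disjoint (P i) (Q i)
  left_subset (i : ι) : P i ⊆ A
  right_subset (i : ι) : Q i ⊆ A
  subsetStar_union (i : ι) : SubsetStar A (P i ∪ Q i)

namespace IsUniformSplitting

variable {P Q : ι → Set ℕ}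

theorem split (h : IsUniformSplitting A P Q) (i : ι) : Split A (P i) := by
  refine ⟨h.uniformlyCE_left.ce i, Q i ∪ A \ (P i ∪ Q i),
    (h.uniformlyCE_right.ce i).union_finite (h.subsetStar_union i), ?_, ?_⟩
  · rw [inter_union_distrib_left, (h.disjoint i).inter_eq, empty_union]
    exact (disjoint_sdiff_right.mono_left subset_union_left).inter_eq
  · rw [← union_assoc]
    exact union_sdiff_cancel (union_subset (h.left_subset i) (h.right_subset i))

theorem comp (h : IsUniformSplitting A P Q) {f : κ → ι} (hf : Computable f) :
    IsUniformSplitting A (fun k => P (f k)) fun k => Q (f k) where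
  uniformlyCE_left := h.uniformlyCE_left.comp hf
  uniformlyCE_right := h.uniformlyCE_right.comp hf
  disjoint k := h.disjoint (f k)
  left_subset k := h.left_subset (f k)
  right_subset k := h.right_subset (f k)
  subsetStar_union k := h.subsetStar_union (f k)

end IsUniformSplitting

/-- Race the enumeration of `A` against the confirmation of `T i = ℕ`, where `x` waits only for the
numbers below `x` to appear in `T i`; `G i` collects the `x` confirmed before they enter `A`. If
`T i = ℕ` then `G i` covers the complement of `A`, and majorness applies to it. -/
theorem MajorSubset.exists_guard (hDA : MajorSubset D A) (hA : CE A) {T : ι → Set ℕ}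
    (hT : UniformlyCE T) :
    ∃ G H : ι → Set ℕ, UniformlyCE G ∧ UniformlyCE H ∧ (∀ i, Disjoint (G i) (H i)) ∧
      (∀ i, H i ⊆ A) ∧ (∀ i, A ⊆ G i ∪ H i) ∧ (∀ i, T i ≠ univ → (G i).Finite) ∧
      ∀ i, T i = univ → SubsetStar A (D ∪ G i) := by
  have h_confirmed : UniformlyCE fun i => {x | ∀ b < x, b ∈ T i} :=
    rePred_forall_lt (p := fun (z : ι × ℕ) b => b ∈ T z.1)
      (rePred_comp hT ((Computable.fst.comp Computable.fst).pair Computable.snd)) Computable.snd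
  obtain ⟨G, H, hG, hH, hGT, hHA, h_disj, h_cover⟩ :=
    h_confirmed.exists_reduction hA.uniformlyCE_const
  refine ⟨G, H, hG, hH, h_disj, hHA, fun i => subset_union_right.trans (h_cover i),
    fun i hi => ?_, fun i hi => ?_⟩
  · obtain ⟨b, hb⟩ := (ne_univ_iff_exists_notMem _).1 hi
    refine (finite_Iic b).subset fun x hx => ?_
    by_contra hbx
    exact hb (hGT i hx b (not_le.1 hbx))
  · have h_union : A ∪ G i = univ := by
      refine eq_univ_of_forall fun x => ?_
      have hx : x ∈ {x | ∀ b < x, b ∈ T i} := fun b _ => hi ▸ mem_univ b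
      exact ((h_cover i) (Or.inl hx)).symm.imp_left fun hxH => hHA i hxH
    exact (hDA.2.2 (G i) (hG.ce i) h_union).subset (sdiff_le_sdiff_right (subset_univ A))

theorem MajorSubset.exists_guarded_splitting (hDA : MajorSubset D A) (hA : CE A)
    {T U V : ι → Set ℕ} (hT : UniformlyCE T) (hU : UniformlyCE U) (hV : UniformlyCE V)
    (hTUV : ∀ i, T i = univ → A ⊆ U i ∪ V i) :
    ∃ P Q : ι → Set ℕ, IsUniformSplitting A P Q ∧ (∀ i, P i ⊆ U i) ∧
      (∀ i, T i ≠ univ → (P i).Finite) ∧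
      ∀ i, T i = univ → SubsetStar (A \ V i) (P i ∪ D) := by
  obtain ⟨G, H, hG, hH, h_disjGH, hHA, hAGH, hG_fin, hG_major⟩ := hDA.exists_guard hA hT
  obtain ⟨E, J, hE, hJ, hEU, hJV, h_disjEJ, hUVEJ⟩ := hU.exists_reduction hV
  have hAG : UniformlyCE fun i => A ∩ G i := hA.uniformlyCE_const.inter hG
  refine ⟨fun i => A ∩ G i ∩ E i, fun i => H i ∪ A ∩ G i ∩ J i,
    ⟨hAG.inter hE, hH.union (hAG.inter hJ), fun i => ?_, fun i x hx => hx.1.1,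
      fun i => union_subset (hHA i) fun x hx => hx.1.1, fun i => ?_⟩,
    fun i x hx => hEU i hx.2, fun i hi => (hG_fin i hi).subset fun x hx => hx.1.2,
    fun i hi => ?_⟩
  · exact ((h_disjGH i).mono_left fun x hx => hx.1.2).union_right
      ((h_disjEJ i).mono inter_subset_right inter_subset_right)
  · by_cases hi : T i = univ
    · refine subsetStar_of_subset fun x hxA => ?_
      have hxGH := hAGH i hxA
      have hxEJ := hUVEJ i (hTUV i hi hxA)
      simp only [mem_union, mem_inter_iff] at hxGH hxEJ ⊢
      tauto
    · refine (hG_fin i hi).subset fun x hx => ?_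
      exact (hAGH i hx.1).resolve_right fun hxH => hx.2 (Or.inr (Or.inl hxH))
  · have hG_almost := subsetStar_iff_eventually.1 (hG_major i hi)
    refine subsetStar_iff_eventually.2 (hG_almost.mono fun x hx => ?_)
    rintro ⟨hxA, hxV⟩
    have hxE : x ∈ E i :=
      (hUVEJ i (hTUV i hi hxA)).resolve_right fun hxJ => hxV (hJV i hxJ)
    exact (hx hxA).symm.imp_left fun hxG => ⟨⟨hxA, hxG⟩, hxE⟩

/-- An ideal of the boolean algebra of splits of `A` modulo `D` and finite differences, given as
the set of splits whose classes lie in the ideal. -/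
structure IsSplitIdeal (A D : Set ℕ) (I : Set (Set ℕ)) : Prop where
  split {X : Set ℕ} : X ∈ I → Split A X
  nonempty : I.Nonempty
  union_mem {X Y : Set ℕ} : X ∈ I → Y ∈ I → X ∪ Y ∈ I
  mem_of_subsetStar {X Y : Set ℕ} : X ∈ I → Split A Y → SubsetStar Y (X ∪ D) → Y ∈ I

namespace IsSplitIdeal

theorem mem_of_finite (hI : IsSplitIdeal A D I) {X : Set ℕ} (hX : Split A X) (h_fin : X.Finite) :
    X ∈ I :=
  let ⟨_, hY⟩ := hI.nonempty
  hI.mem_of_subsetStar hY hX h_fin.sdiff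

theorem biUnion_le_mem (hI : IsSplitIdeal A D I) {P : ℕ → Set ℕ} (hP : ∀ n, P n ∈ I) (m : ℕ) :
    ⋃ n ≤ m, P n ∈ I := by
  induction m with
  | zero => simpa using hP 0
  | succ m ih =>
    rw [biUnion_le_succ]
    exact hI.union_mem ih (hP (m + 1))

/-- The indices are the triples `(e, i, a)`, read as the guess that `Wset i` complements `Wset e` in
`A` and that `a` witnesses the `Σ⁰₃` fact `Wset e ∈ I`. -/
theorem exists_generators (hI : IsSplitIdeal A D I) (hA : CE A) (hDA : MajorSubset D A)
    (h_index : Sigma03 {e | Split A (Wset e) ∧ Wset e ∈ I}) :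
    ∃ P Q : ℕ → Set ℕ, IsUniformSplitting A P Q ∧ (∀ n, P n ∈ I) ∧
      ∀ X ∈ I, ∃ n, SubsetStar X (P n ∪ D) := by
  obtain ⟨S, hS, hS_iff⟩ := h_index.exists_uniformlyCE
  let U : ℕ × ℕ × ℕ → Set ℕ := fun z => Wset z.1
  let V : ℕ × ℕ × ℕ → Set ℕ := fun z => Wset z.2.1
  have hU : UniformlyCE U := uniformlyCE_Wset.comp Computable.fst
  have hV : UniformlyCE V := uniformlyCE_Wset.comp (Computable.fst.comp Computable.snd)
  obtain ⟨T, hT, hT_iff⟩ := (hU.union hV).exists_eq_univ_iff_subset hA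
  have hS' : UniformlyCE fun z : ℕ × ℕ × ℕ => S (z.1, z.2.2) :=
    hS.comp (Computable.fst.pair (Computable.snd.comp Computable.snd))
  obtain ⟨P, Q, hPQ, hPU, hP_fin, hP_large⟩ := hDA.exists_guarded_splitting hA
    (hS'.inter hT) hU hV fun z hz => (hT_iff z).1 (inf_eq_top_iff.1 hz).2
  have hPI : ∀ z, P z ∈ I := by
    intro z
    by_cases hz : S (z.1, z.2.2) ∩ T z = univ
    · have h_mem : U z ∈ I := ((hS_iff z.1).2 ⟨z.2.2, (inf_eq_top_iff.1 hz).1⟩).2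
      exact hI.mem_of_subsetStar h_mem (hPQ.split z)
        (subsetStar_of_subset ((hPU z).trans subset_union_left))
    · exact hI.mem_of_finite (hPQ.split z) (hP_fin z hz)
  have hP_generates : ∀ X ∈ I, ∃ z, SubsetStar X (P z ∪ D) := by
    intro X hX
    obtain ⟨hX_ce, Y, hY_ce, hXY, rfl⟩ := hI.split hX
    obtain ⟨e, rfl⟩ := hX_ce.exists_Wset_eq
    obtain ⟨i, rfl⟩ := hY_ce.exists_Wset_eq
    obtain ⟨a, ha⟩ := (hS_iff e).1 ⟨hI.split hX, hX⟩
    have h_true : S (e, a) ∩ T (e, i, a) = univ :=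
      inf_eq_top_iff.2 ⟨ha, (hT_iff _).2 Subset.rfl⟩
    refine ⟨(e, i, a), (hP_large (e, i, a) h_true).subset (sdiff_le_sdiff_right ?_)⟩
    exact fun x hx => ⟨Or.inl hx, fun hxi => (hXY.subset ⟨hx, hxi⟩).elim⟩
  refine ⟨_, _, hPQ.comp (Computable.ofNat (ℕ × ℕ × ℕ)), fun n => hPI _, fun X hX => ?_⟩
  obtain ⟨z, hz⟩ := hP_generates X hX
  exact ⟨Encodable.encode z, by simpa only [Denumerable.ofNat_encode] using hz⟩

end IsSplitIdeal

/-- `C` collects one thinned piece of `Wset j ∩ Q 0 ∩ ⋯ ∩ Q j` for each `j`. -/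
theorem UniformlyCE.exists_pseudoIntersection (hD : CE D) {Q : ℕ → Set ℕ} (hQ : UniformlyCE Q) :
    ∃ C : Set ℕ, CE C ∧ C ⊆ ⋃ n, Q n ∧ (∀ n, SubsetStar C (Q n ∪ D)) ∧
      ∀ X, CE X → SubsetStar (X ∩ C) D → ∃ m, SubsetStar (X ∩ ⋂ n ≤ m, Q n) D := by
  obtain ⟨K, hK, hKV, hKD, hK_large⟩ :=
    (uniformlyCE_Wset.inter hQ.biInter_le).exists_thinning hD
  have hKQ : ∀ {n j}, n ≤ j → K j ⊆ Q n := fun hnj x hx => mem_iInter₂.1 (hKV _ hx).2 _ hnj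
  refine ⟨⋃ j, K j, hK.ce_iUnion, iUnion_mono fun j => hKQ le_rfl, fun n => ?_, ?_⟩
  · refine ((finite_Iio n).biUnion fun j _ => hKD j).subset ?_
    rintro x ⟨hxK, hx⟩
    obtain ⟨j, hxj⟩ := mem_iUnion.1 hxK
    have hjn : j < n := lt_of_not_ge fun hnj => hx (Or.inl (hKQ hnj hxj))
    exact mem_biUnion hjn ⟨hxj, fun hxD => hx (Or.inr hxD)⟩
  · intro X hX hXC
    -- Deleting the finite set `(X ∩ C) \ D` from `X` gives a c.e. set that avoids `C` outside `D`.
    obtain ⟨j, hj⟩ := (hX.diff_finite hXC).exists_Wset_eq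
    have hKj : K j ⊆ D := by
      intro x hxK
      have hx : x ∈ X \ ((X ∩ ⋃ j, K j) \ D) := hj ▸ (hKV j hxK).1
      by_contra hxD
      exact hx.2 ⟨⟨hx.1, mem_iUnion_of_mem j hxK⟩, hxD⟩
    refine ⟨j, hXC.subset ?_⟩
    rintro x ⟨⟨hxX, hxQ⟩, hxD⟩
    by_contra hx
    exact hxD (hK_large j hKj ⟨hj ▸ ⟨hxX, hx⟩, hxQ⟩)

theorem IsUniformSplitting.subsetStar_biUnion {P Q : ℕ → Set ℕ} (h : IsUniformSplitting A P Q)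
    {X : Set ℕ} (hXA : X ⊆ A) {m : ℕ} (hXQ : SubsetStar (X ∩ ⋂ n ≤ m, Q n) D) :
    SubsetStar X ((⋃ n ≤ m, P n) ∪ D) := by
  have h_cover : ∀ᶠ x in cofinite, ∀ n ∈ Iic m, x ∈ A → x ∈ P n ∪ Q n :=
    (finite_Iic m).eventually_all.2 fun n _ =>
      subsetStar_iff_eventually.1 (h.subsetStar_union n)
  rw [subsetStar_iff_eventually] at hXQ ⊢
  filter_upwards [h_cover, hXQ] with x hx_cover hx_XQ hxX
  by_contra hx
  simp only [mem_union, mem_iUnion, not_or, not_exists] at hx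
  refine hx.2 (hx_XQ ⟨hxX, mem_iInter₂.2 fun n hn => ?_⟩)
  exact (hx_cover n hn (hXA hxX)).resolve_left (hx.1 n hn)

end Splits

/-- Let `A`, `D` be c.e. with `D ⊂ₘ A`, and let `I` be a `Σ⁰₃`-ideal
of the boolean algebra of splits of `A` modulo `D` and finite differences.  Then
there is a c.e. set `C` with `D ⊆* C ⊆* A` such that for every split `X ⊑ A`,
`X ∈ I` iff `X ∩ C ⊆* D`. -/
theorem stmt12 (A D : Set ℕ) (hA : CE A) (hD : CE D) (hmajor : MajorSubset D A)
    (I : Set (Set ℕ))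
    (hsplits : ∀ X ∈ I, Split A X)
    (hne : I.Nonempty)
    (hunion : ∀ X ∈ I, ∀ Y ∈ I, X ∪ Y ∈ I)
    (hdown : ∀ X ∈ I, ∀ Y : Set ℕ, Split A Y → SubsetStar Y (X ∪ D) → Y ∈ I)
    (hindex : Sigma03 {e : ℕ | Split A (Wset e) ∧ Wset e ∈ I}) :
    ∃ C : Set ℕ, CE C ∧ SubsetStar D C ∧ SubsetStar C A ∧
      ∀ X : Set ℕ, Split A X → (X ∈ I ↔ SubsetStar (X ∩ C) D) := by
  have hI : IsSplitIdeal A D I :=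
    ⟨hsplits _, hne, fun hX hY => hunion _ hX _ hY, fun hX => hdown _ hX _⟩
  obtain ⟨P, Q, hPQ, hPI, hP_generates⟩ := hI.exists_generators hA hmajor hindex
  obtain ⟨C, hC, hCQ, hC_almost, hC_large⟩ := hPQ.uniformlyCE_right.exists_pseudoIntersection hD
  have hCA : C ⊆ A := hCQ.trans (iUnion_subset hPQ.right_subset)
  refine ⟨D ∪ C, hD.union hC, subsetStar_of_subset subset_union_left,
    subsetStar_of_subset (union_subset hmajor.1 hCA), fun X hX => ⟨fun hXI => ?_, fun hXC => ?_⟩⟩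
  · obtain ⟨n, hn⟩ := hP_generates X hXI
    have hCn := hC_almost n
    rw [subsetStar_iff_eventually] at hn hCn ⊢
    filter_upwards [hn, hCn] with x hxP hxQ ⟨hxX, hxDC⟩
    rcases hxDC with hxD | hxC
    · exact hxD
    · rcases hxP hxX with hxP | hxD
      · exact (hxQ hxC).resolve_left (disjoint_left.1 (hPQ.disjoint n) hxP)
      · exact hxD
  · have hXA : X ⊆ A := let ⟨_, Y, _, _, hXY⟩ := hX; hXY ▸ subset_union_left
    obtain ⟨m, hm⟩ := hC_large X hX.1
      (hXC.subset (sdiff_le_sdiff_right (inter_subset_inter_right X subset_union_right)))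
    exact hI.mem_of_subsetStar (hI.biUnion_le_mem hPI m) hX (hPQ.subsetStar_biUnion hXA hm)
end

section
/- It is not possible to code an infinite linear ordering in E without parameters: for every n ≥ 1 and every first-order formula φ(x₁, …, xₙ, y₁, …, yₙ) with 2n free variables in the language of E, if the 2n-ary relation ≤_L defined by X̄ ≤_L Ȳ iff E ⊨ φ(X̄, Ȳ) is a linear preorder on n-tuples of c.e. sets (transitive, and for all n-tuples X̄, Ȳ of c.e. sets either X̄ ≤_L Ȳ or Ȳ ≤_L X̄), then the equivalence relation defined by X̄ ≡_L Ȳ iff X̄ ≤_L Ȳ and Ȳ ≤_L X̄ has only finitely many equivalence classes. -/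
open FirstOrder

/-- The universe of the structure `E`: all c.e. subsets of `ℕ`. -/
def CESets : Type := {A : Set ℕ // CE A}

/-- The relation symbols of the language of `E`: a single binary relation
(interpreted as inclusion). -/
inductive incRel : ℕ → Type
  | inc : incRel 2

/-- The language of `E`, with one binary relation symbol. -/
def Linc : Language := ⟨fun _ => Empty, incRel⟩

/-- The structure `E`: c.e. sets with the binary relation interpreted as set
inclusion. -/
instance EStructure : Linc.Structure CESets where
  funMap := fun f _ => f.elim
  RelMap | .inc => fun x => (x 0).val ⊆ (x 1).val

/-!
The even and odd halves of a c.e. set give an isomorphism `E ≅ E × E`, so it is enough to work in a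
square `M × M`.

By the Feferman–Vaught analysis of products, the truth value of a formula in `M × N` depends on the
two components of its variables only through finitely many types. Suppose a definable total preorder
on `M × M` had infinitely many classes, with representatives `(aᵢ, bᵢ)`. By Ramsey's theorem we may
assume that, for `i < j`, the types of pairs of entries from `{aᵢ, bᵢ, aⱼ, bⱼ}` do not depend on `i`
and `j`. Exchanging the coordinates is an automorphism, so `(a, b)` and `(b, a)` are equivalent, and
this makes the comparisons "up in one coordinate and down in the other" between points `(aᵢ, bⱼ)`
all have the same truth value. By totality they all hold, and going from `(a₁, b₁)` to
`(a₂, b₂)` and back through `(a₃, b₀)` shows that these two points are equivalent.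
-/

section Ramsey

open Filter

theorem exists_strictMono_forall_lt_eq {F : Type*} [Finite F] (c : ℕ → ℕ → F) :
    ∃ (h : ℕ → ℕ) (d : F), StrictMono h ∧ ∀ i j, i < j → c (h i) (h j) = d := by
  have eventually_const (e : ℕ → F) : ∃ d, ∀ᶠ j in hyperfilter ℕ, e j = d :=
    Ultrafilter.eventually_exists_iff.1 (.of_forall fun j => ⟨e j, rfl⟩)
  choose limit h_limit using fun i => eventually_const (c i)
  obtain ⟨d, hd⟩ := eventually_const limit
  obtain ⟨h, -, hh⟩ := exists_seq_of_forall_finset_exists (limit · = d)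
    (fun i j => i < j ∧ c i j = d) fun s hs => by
      have next : ∀ᶠ j in hyperfilter ℕ, ∀ i ∈ s, i < j ∧ c i j = d :=
        (eventually_all_finset s).2 fun i hi =>
          ((eventually_gt_atTop i).filter_mono Nat.hyperfilter_le_atTop).and (hs i hi ▸ h_limit i)
      exact (hd.and next).exists
  exact ⟨h, d, fun i j hij => (hh i j hij).1, fun i j hij => (hh i j hij).2⟩

end Ramsey

section FiniteRange

-- A relation is a finite Boolean combination of rectangles `{(a, b) | P a ∧ Q b}` exactly when it
-- has finitely many rows, which is how the Feferman–Vaught property is expressed below.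

universe u

variable {A B C D X Y : Type*} {R S : A → B → Prop}

theorem finite_range_and (p : A → Prop) (q : B → Prop) :
    (Set.range fun a b => p a ∧ q b).Finite :=
  (Set.toFinite (Set.range fun (P : Prop) b => P ∧ q b)).subset <|
    Set.range_subset_iff.2 fun a => ⟨p a, rfl⟩

theorem finite_range_imp (hR : (Set.range R).Finite) (hS : (Set.range S).Finite) :
    (Set.range fun a b => R a b → S a b).Finite :=
  (hR.image2 (fun ρ σ b => ρ b → σ b) hS).subset <|
    Set.range_subset_iff.2 fun a => ⟨R a, ⟨a, rfl⟩, S a, ⟨a, rfl⟩, rfl⟩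

theorem finite_range_comp (hR : (Set.range R).Finite) (f : C → A) (g : D → B) :
    (Set.range fun c d => R (f c) (g d)).Finite :=
  (hR.image (· ∘ g)).subset <| Set.range_subset_iff.2 fun c => ⟨R (f c), ⟨f c, rfl⟩, rfl⟩

theorem finite_range_forall (hR : (Set.range R).Finite) (f : C → X → A) (g : D → Y → B) :
    (Set.range fun c d => ∀ x y, R (f c x) (g d y)).Finite := by
  refine (hR.finite_subsets.image fun 𝒮 d => ∀ ρ ∈ 𝒮, ∀ y, ρ (g d y)).subset <|
    Set.range_subset_iff.2 fun c => ⟨Set.range fun x => R (f c x), ?_, ?_⟩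
  · exact Set.range_subset_iff.2 fun x => ⟨f c x, rfl⟩
  · simp only [Set.forall_mem_range]

theorem finite_range_flip (hR : (Set.range R).Finite) : (Set.range (flip R)).Finite := by
  have := hR.to_subtype
  refine (Set.toFinite (Set.range fun (𝒮 : Set (Set.range R)) a =>
    Set.rangeFactorization R a ∈ 𝒮)).subset <|
      Set.range_subset_iff.2 fun b => ⟨{ρ | ρ.1 b}, rfl⟩

theorem exists_finite_coloring_of_finite_range {V : Type u} {R : V → V → Prop}
    (hR : (Set.range R).Finite) :
    ∃ (F : Type u) (_ : Finite F) (color : V → F), ∀ {a a' b b'},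
      color a = color a' → color b = color b' → (R a b ↔ R a' b') := by
  have := hR.to_subtype
  have := (finite_range_flip hR).to_subtype
  refine ⟨Set.range R × Set.range (flip R), inferInstance,
    fun a => (Set.rangeFactorization R a, Set.rangeFactorization (flip R) a), ?_⟩
  intro a a' b b' ha hb
  have row_eq : R a = R a' := congrArg (·.1.1) ha
  have column_eq : flip R b = flip R b' := congrArg (·.2.1) hb
  calc R a b ↔ R a' b := by rw [row_eq]
    _ ↔ R a' b' := iff_of_eq (congrFun column_eq a')

end FiniteRange

section Square

theorem antisymmRel_of_antidiagonal_iff {r : ℕ × ℕ → ℕ × ℕ → Prop} {P : Prop}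
    (htrans : ∀ p q s, r p q → r q s → r p s) (htotal : ∀ p q, r p q ∨ r q p)
    (h_down : ∀ i j k l, i < k → l < j → (r (i, j) (k, l) ↔ P))
    (h_up : ∀ i j k l, k < i → j < l → (r (i, j) (k, l) ↔ P)) :
    AntisymmRel r (1, 1) (2, 2) := by
  have hP : P := (htotal (0, 1) (1, 0)).elim (h_down 0 1 1 0 one_pos one_pos).1
    (h_up 1 0 0 1 one_pos one_pos).1
  have down {i j k l} (hik : i < k) (hlj : l < j) : r (i, j) (k, l) := (h_down i j k l hik hlj).2 hP
  have up {i j k l} (hki : k < i) (hjl : j < l) : r (i, j) (k, l) := (h_up i j k l hki hjl).2 hP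
  exact ⟨htrans _ (3, 0) _ (down (by decide) (by decide)) (up (by decide) (by decide)),
    htrans _ (3, 0) _ (down (by decide) (by decide)) (up (by decide) (by decide))⟩

/-- The colors of all pairs of entries taken one from `p` and one from `q`, in the orders that occur
when the points `(pᵢ.1, pⱼ.2)` built from a sequence `p` are compared. -/
def entryColors {A F : Type*} (color : A × A → F) (p q : A × A) : F × F × F × F × F × F :=
  (color (p.1, q.1), color (q.1, p.1), color (p.2, q.2), color (q.2, p.2),
    color (p.1, q.2), color (p.2, q.1))

theorem antisymmRel_of_entryColors_eq {A F : Type*} {r : A × A → A × A → Prop}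
    (htrans : ∀ p q s, r p q → r q s → r p s) (htotal : ∀ p q, r p q ∨ r q p)
    (hswap : ∀ p, r p p.swap) {color : A × A → F}
    (hcolor : ∀ {a a' b b'}, color a = color a' → color b = color b' →
      (r (a.1, b.1) (a.2, b.2) ↔ r (a'.1, b'.1) (a'.2, b'.2)))
    {p : ℕ → A × A} {d : F × F × F × F × F × F}
    (hp : ∀ i j, i < j → entryColors color (p i) (p j) = d) :
    AntisymmRel r (p 1) (p 2) := by
  obtain ⟨xx, xx', yy, yy', xy, yx⟩ := d
  simp only [entryColors, Prod.mk.injEq, forall_and] at hp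
  obtain ⟨hxx, hxx', hyy, hyy', hxy, hyx⟩ := hp
  let x i := (p i).1
  let y i := (p i).2
  have down_iff_down {i j k l i' j' k' l'} (hik : i < k) (hlj : l < j) (hik' : i' < k')
      (hlj' : l' < j') : r (x i, y j) (x k, y l) ↔ r (x i', y j') (x k', y l') :=
    hcolor ((hxx i k hik).trans (hxx i' k' hik').symm)
      ((hyy' l j hlj).trans (hyy' l' j' hlj').symm)
  have up_iff_up {i j k l i' j' k' l'} (hki : k < i) (hjl : j < l) (hki' : k' < i')
      (hjl' : j' < l') : r (x i, y j) (x k, y l) ↔ r (x i', y j') (x k', y l') :=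
    hcolor ((hxx' k i hki).trans (hxx' k' i' hki').symm)
      ((hyy j l hjl).trans (hyy j' l' hjl').symm)
  have cross_iff_cross {i j k l i' j' k' l'} (hil : i < l) (hjk : j < k) (hil' : i' < l')
      (hjk' : j' < k') : r (x i, y j) (y l, x k) ↔ r (x i', y j') (y l', x k') :=
    hcolor ((hxy i l hil).trans (hxy i' l' hil').symm)
      ((hyx j k hjk).trans (hyx j' k' hjk').symm)
  have swap_right (p q) : r p q.swap ↔ r p q :=
    ⟨fun hpq => htrans _ _ _ hpq (hswap q.swap), fun hpq => htrans _ _ _ hpq (hswap q)⟩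
  have up_iff_down : r (x 2, y 0) (x 1, y 3) ↔ r (x 0, y 2) (x 3, y 1) :=
    calc r (x 2, y 0) (x 1, y 3)
      _ ↔ r (x 2, y 0) (y 3, x 1) := (swap_right _ (x 1, y 3)).symm
      _ ↔ r (x 0, y 2) (y 1, x 3) := cross_iff_cross (by decide) (by decide) (by decide) (by decide)
      _ ↔ r (x 0, y 2) (x 3, y 1) := swap_right _ (x 3, y 1)
  change AntisymmRel (fun i j : ℕ × ℕ => r (x i.1, y i.2) (x j.1, y j.2)) (1, 1) (2, 2)
  exact antisymmRel_of_antidiagonal_iff (fun _ _ _ => htrans _ _ _) (fun _ _ => htotal _ _)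
    (fun i j k l hik hlj => down_iff_down hik hlj (by decide) (by decide))
    (fun i j k l hki hjl => (up_iff_up hki hjl (by decide) (by decide)).trans up_iff_down)

theorem wellQuasiOrdered_antisymmRel_of_finite_range {A : Type*} {r : A × A → A × A → Prop}
    (htrans : ∀ p q s, r p q → r q s → r p s) (htotal : ∀ p q, r p q ∨ r q p)
    (hswap : ∀ p, r p p.swap)
    (hfin : (Set.range fun x y : A × A => r (x.1, y.1) (x.2, y.2)).Finite) :
    WellQuasiOrdered (AntisymmRel r) := by
  intro p
  obtain ⟨F, _, color, hcolor⟩ := exists_finite_coloring_of_finite_range hfin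
  obtain ⟨h, d, h_mono, h_colors⟩ :=
    exists_strictMono_forall_lt_eq fun i j => entryColors color (p i) (p j)
  exact ⟨h 1, h 2, h_mono one_lt_two,
    antisymmRel_of_entryColors_eq htrans htotal hswap hcolor (p := p ∘ h) h_colors⟩

end Square

section Product

open FirstOrder.Language

variable {L : FirstOrder.Language} {M N : Type*} [L.Structure M] [L.Structure N]
  {α : Type*} {n : ℕ}

/-- The direct product of two structures: functions act, and relations hold, componentwise. -/
instance prodStructure : L.Structure (M × N) where
  funMap f x := (Structure.funMap f (Prod.fst ∘ x), Structure.funMap f (Prod.snd ∘ x))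
  RelMap R x := Structure.RelMap R (Prod.fst ∘ x) ∧ Structure.RelMap R (Prod.snd ∘ x)

/-- Exchanging the factors, as an isomorphism of direct products. -/
def prodCommEquiv : (M × N) ≃[L] (N × M) where
  toEquiv := Equiv.prodComm M N
  map_fun' _ _ := rfl
  map_rel' _ _ := and_comm

theorem realize_term_prod (t : L.Term α) (v : α → M) (w : α → N) :
    t.realize (Function.prod v w) = (t.realize v, t.realize w) := by
  induction t with
  | var i => rfl
  | func f ts ih => simp only [Term.realize_func, ih]; rfl

theorem sumElim_prod {β : Type*} (v : α → M) (w : α → N) (xs : β → M) (ys : β → N) :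
    Sum.elim (Function.prod v w) (Function.prod xs ys) =
      Function.prod (Sum.elim v xs) (Sum.elim w ys) := by
  ext i <;> cases i <;> rfl

theorem snoc_prod (xs : Fin n → M) (ys : Fin n → N) (x : M) (y : N) :
    Fin.snoc (α := fun _ => M × N) (Function.prod xs ys) (x, y) =
      Function.prod (Fin.snoc (α := fun _ => M) xs x) (Fin.snoc (α := fun _ => N) ys y) := by
  ext i <;> cases i using Fin.lastCases <;> simp

theorem realize_equal_prod (t₁ t₂ : L.Term (α ⊕ Fin n)) (v : α → M) (w : α → N)
    (xs : Fin n → M) (ys : Fin n → N) :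
    (BoundedFormula.equal t₁ t₂).Realize (Function.prod v w) (Function.prod xs ys) ↔
      t₁.realize (Sum.elim v xs) = t₂.realize (Sum.elim v xs) ∧
        t₁.realize (Sum.elim w ys) = t₂.realize (Sum.elim w ys) := by
  rw [BoundedFormula.Realize, sumElim_prod, realize_term_prod, realize_term_prod, Prod.mk.injEq]

theorem realize_rel_prod {k : ℕ} (R : L.Relations k) (ts : Fin k → L.Term (α ⊕ Fin n))
    (v : α → M) (w : α → N) (xs : Fin n → M) (ys : Fin n → N) :
    (BoundedFormula.rel R ts).Realize (Function.prod v w) (Function.prod xs ys) ↔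
      Structure.RelMap R (fun i => (ts i).realize (Sum.elim v xs)) ∧
        Structure.RelMap R (fun i => (ts i).realize (Sum.elim w ys)) := by
  rw [BoundedFormula.Realize, sumElim_prod]
  simp only [realize_term_prod]
  rfl

theorem realize_all_prod (φ : L.BoundedFormula α (n + 1)) (v : α → M) (w : α → N)
    (xs : Fin n → M) (ys : Fin n → N) :
    φ.all.Realize (Function.prod v w) (Function.prod xs ys) ↔
      ∀ (x : M) (y : N), φ.Realize (Function.prod v w)
        (Function.prod (Fin.snoc xs x : Fin (n + 1) → M) (Fin.snoc ys y)) := by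
  simp only [BoundedFormula.realize_all, Prod.forall]
  exact forall₂_congr fun x y => by rw [snoc_prod]

theorem finite_range_realize_boundedFormula_prod (φ : L.BoundedFormula α n) :
    (Set.range fun (v : (α → M) × (Fin n → M)) (w : (α → N) × (Fin n → N)) =>
      φ.Realize (Function.prod v.1 w.1) (Function.prod v.2 w.2)).Finite := by
  induction φ with
  | falsum => exact (Set.finite_singleton _).subset (Set.range_const_subset (c := fun _ => False))
  | equal t₁ t₂ => simpa only [realize_equal_prod] using finite_range_and _ _
  | rel R ts => simpa only [realize_rel_prod] using finite_range_and _ _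
  | imp φ ψ ihφ ihψ => exact finite_range_imp ihφ ihψ
  | @all n φ ih =>
    simpa only [realize_all_prod] using finite_range_forall ih
      (fun (v : (α → M) × (Fin n → M)) x => (v.1, Fin.snoc v.2 x))
      (fun (w : (α → N) × (Fin n → N)) y => (w.1, Fin.snoc w.2 y))

theorem finite_range_realize_formula_prod (φ : L.Formula α) :
    (Set.range fun (v : α → M) (w : α → N) => φ.Realize (Function.prod v w)).Finite := by
  have h := finite_range_comp (finite_range_realize_boundedFormula_prod (M := M) (N := N) φ)
    (fun v => (v, default)) (fun w => (w, default))
  have prod_default : Function.prod (default : Fin 0 → M) (default : Fin 0 → N) = default :=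
    Subsingleton.elim _ _
  simpa only [Formula.Realize, prod_default] using h

theorem wellQuasiOrdered_antisymmRel_realize_prod (φ : L.Formula (α ⊕ α))
    (htrans : ∀ X Y Z : α → M × M,
      φ.Realize (Sum.elim X Y) → φ.Realize (Sum.elim Y Z) → φ.Realize (Sum.elim X Z))
    (htotal : ∀ X Y : α → M × M, φ.Realize (Sum.elim X Y) ∨ φ.Realize (Sum.elim Y X)) :
    WellQuasiOrdered (AntisymmRel fun X Y : α → M × M => φ.Realize (Sum.elim X Y)) := by
  let tuple (p : (α → M) × (α → M)) : α → M × M := Function.prod p.1 p.2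
  have realize_swap (X Y : α → M × M) :
      φ.Realize (Sum.elim (Prod.swap ∘ X) (Prod.swap ∘ Y)) ↔ φ.Realize (Sum.elim X Y) := by
    rw [← Sum.comp_elim]
    exact StrongHomClass.realize_formula (prodCommEquiv (L := L) (M := M) (N := M)) φ
  have le_swap (X : α → M × M) : φ.Realize (Sum.elim X (Prod.swap ∘ X)) :=
    (htotal X (Prod.swap ∘ X)).elim id (realize_swap X (Prod.swap ∘ X)).1
  have finite_range :
      (Set.range fun x y : (α → M) × (α → M) =>
        φ.Realize (Sum.elim (tuple (x.1, y.1)) (tuple (x.2, y.2)))).Finite := by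
    have h := finite_range_comp (finite_range_realize_formula_prod (M := M) (N := M) φ)
      (fun x : (α → M) × (α → M) => Sum.elim x.1 x.2)
      (fun y : (α → M) × (α → M) => Sum.elim y.1 y.2)
    simpa only [tuple, ← sumElim_prod] using h
  have h := wellQuasiOrdered_antisymmRel_of_finite_range
    (r := fun p q => φ.Realize (Sum.elim (tuple p) (tuple q)))
    (fun _ _ _ => htrans _ _ _) (fun _ _ => htotal _ _) (fun p => le_swap (tuple p)) finite_range
  exact h.of_surjective ⟨tuple, id⟩ fun X => ⟨(Prod.fst ∘ X, Prod.snd ∘ X), rfl⟩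

end Product

section ComputablyEnumerable

theorem CE.preimage {A : Set ℕ} (hA : CE A) {h : ℕ → ℕ} (hh : Computable h) : CE (h ⁻¹' A) := by
  obtain ⟨f, hf, rfl⟩ := hA
  exact ⟨fun n => f (h n), hf.comp hh, rfl⟩

theorem CE.ite {A B : Set ℕ} (hA : CE A) (hB : CE B) {c : ℕ → Bool} (hc : Computable c) :
    CE {n | if c n then n ∈ A else n ∈ B} := by
  obtain ⟨f, hf, rfl⟩ := hA
  obtain ⟨g, hg, rfl⟩ := hB
  refine ⟨fun n => cond (c n) (f n) (g n), Partrec.cond hc hf hg, ?_⟩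
  ext n
  cases hn : c n <;> simp [hn, PFun.Dom]

theorem computable_bit (b : Bool) : Computable (Nat.bit b) := by
  cases b
  · exact Primrec.nat_double.to_comp
  · exact Primrec.nat_double_succ.to_comp

namespace CESets

/-- The even (`b = false`) or odd (`b = true`) half of a c.e. set. -/
def half (b : Bool) (A : CESets) : CESets := ⟨Nat.bit b ⁻¹' A.1, A.2.preimage (computable_bit b)⟩

/-- The c.e. set with even half `A` and odd half `B`, the join `A ⊕ B` of computability theory. -/
def join (A B : CESets) : CESets :=
  ⟨{n | if n.bodd then n.div2 ∈ B.1 else n.div2 ∈ A.1},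
    (B.2.preimage Computable.nat_div2).ite (A.2.preimage Computable.nat_div2) Computable.nat_bodd⟩

theorem half_false_join (A B : CESets) : half false (join A B) = A := by
  apply Subtype.ext
  ext n
  simp [half, join, -Nat.bit_false]

theorem half_true_join (A B : CESets) : half true (join A B) = B := by
  apply Subtype.ext
  ext n
  simp [half, join, -Nat.bit_true]

theorem join_half (A : CESets) : join (half false A) (half true A) = A := by
  apply Subtype.ext
  ext n
  cases n using Nat.bitCasesOn with
  | bit b n => cases b <;> simp [half, join, -Nat.bit_false, -Nat.bit_true]

theorem subset_iff_half (A B : CESets) :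
    A.1 ⊆ B.1 ↔ (half false A).1 ⊆ (half false B).1 ∧ (half true A).1 ⊆ (half true B).1 := by
  refine ⟨fun h => ⟨Set.preimage_mono h, Set.preimage_mono h⟩, ?_⟩
  rintro ⟨h_even, h_odd⟩ n hn
  cases n using Nat.bitCasesOn with
  | bit b n =>
    cases b
    · exact h_even hn
    · exact h_odd hn

/-- The isomorphism `E ≅ E × E` splitting a c.e. set into its even and odd halves. -/
def equivProd : CESets ≃[Linc] (CESets × CESets) where
  toFun A := (half false A, half true A)
  invFun p := join p.1 p.2
  left_inv := join_half
  right_inv p := Prod.ext (half_false_join p.1 p.2) (half_true_join p.1 p.2)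
  map_fun' f := f.elim
  map_rel' R x := by
    cases R
    exact (subset_iff_half (x 0) (x 1)).symm

end CESets

end ComputablyEnumerable

theorem exists_finite_forall_exists_of_wellQuasiOrdered {α : Type*} {r : α → α → Prop}
    (hr : WellQuasiOrdered r) : ∃ T : Set α, T.Finite ∧ ∀ x, ∃ y ∈ T, r y x := by
  by_contra! h
  obtain ⟨f, -, hf⟩ := exists_seq_of_forall_finset_exists (fun _ => True) (fun y x => ¬ r y x)
    fun s _ => (h s s.finite_toSet).imp fun _ hx => ⟨trivial, hx⟩
  obtain ⟨i, j, hij, hrij⟩ := hr f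
  exact hf i j hij hrij

theorem stmt19_general {L : FirstOrder.Language} {M N α : Type*} [L.Structure M] [L.Structure N]
    (e : N ≃[L] (M × M)) (φ : L.Formula (α ⊕ α))
    (htrans : ∀ X Y Z : α → N,
      φ.Realize (Sum.elim X Y) → φ.Realize (Sum.elim Y Z) → φ.Realize (Sum.elim X Z))
    (htotal : ∀ X Y : α → N, φ.Realize (Sum.elim X Y) ∨ φ.Realize (Sum.elim Y X)) :
    ∃ T : Set (α → N), T.Finite ∧
      ∀ X : α → N, ∃ Y ∈ T, φ.Realize (Sum.elim X Y) ∧ φ.Realize (Sum.elim Y X) := by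
  have realize_symm (X Y : α → M × M) :
      φ.Realize (Sum.elim (e.symm ∘ X) (e.symm ∘ Y)) ↔ φ.Realize (Sum.elim X Y) := by
    rw [← Sum.comp_elim, FirstOrder.Language.StrongHomClass.realize_formula]
  have h := wellQuasiOrdered_antisymmRel_realize_prod φ
    (fun X Y Z => by simpa only [realize_symm] using htrans (e.symm ∘ X) (e.symm ∘ Y) (e.symm ∘ Z))
    (fun X Y => by simpa only [realize_symm] using htotal (e.symm ∘ X) (e.symm ∘ Y))
  have h' : WellQuasiOrdered (AntisymmRel fun X Y : α → N => φ.Realize (Sum.elim X Y)) :=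
    h.of_surjective ⟨(e.symm ∘ ·), And.imp (realize_symm _ _).2 (realize_symm _ _).2⟩
      e.symm.surjective.comp_left
  obtain ⟨T, hT, h_cover⟩ := exists_finite_forall_exists_of_wellQuasiOrdered h'
  exact ⟨T, hT, fun X => (h_cover X).imp fun _ hY => ⟨hY.1, hY.2.symm⟩⟩

/-- No infinite linear ordering can be coded in `E` without
parameters: if a first-order formula `φ` with `2n` free variables defines a linear
preorder `≤_L` on `n`-tuples of c.e. sets (transitive and total), then the induced
equivalence relation `≡_L` has only finitely many classes. -/
theorem stmt19 (n : ℕ) (hn : 1 ≤ n) (φ : Linc.Formula (Fin n ⊕ Fin n))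
    (htrans : ∀ X Y Z : Fin n → CESets,
      φ.Realize (Sum.elim X Y) → φ.Realize (Sum.elim Y Z) → φ.Realize (Sum.elim X Z))
    (htotal : ∀ X Y : Fin n → CESets,
      φ.Realize (Sum.elim X Y) ∨ φ.Realize (Sum.elim Y X)) :
    ∃ T : Set (Fin n → CESets), T.Finite ∧
      ∀ X : Fin n → CESets, ∃ Y ∈ T,
        φ.Realize (Sum.elim X Y) ∧ φ.Realize (Sum.elim Y X) :=
  stmt19_general CESets.equivProd φ htrans htotal
end
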